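/- arXiv:0709.1084 — 5 statements merged into one kernel-verified Lean document; each statement's English description precedes it below -/
import Mathlib

section
/- Let θ be a real number and for t ≥ 0 set L_θ(t) = inf over integers k ≥ 1 of √(k² + 4 t² sin²(kθ/2)). Then the function t ↦ L_θ(t) is bounded above on [0,∞) if and only if θ/(2π) is a rational number. (Equivalently: the injectivity radius of the flat plane bundle over the circle obtained as the quotient of ℝ³ by the screw motion of angle θ and translation length 1 is bounded if and only if θ is a rational multiple of 2π.) -/
/-- Twice the injectivity radius at distance `t` from the soul of the flat plane bundle
over the circle obtained by quotienting `ℝ³` by the screw motion of angle `θ` and unit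
translation length: the infimum over integers `k ≥ 1` of `√(k² + 4 t² sin²(kθ/2))`. -/
noncomputable def L (θ t : ℝ) : ℝ :=
  ⨅ k : ℕ+, Real.sqrt ((k : ℝ) ^ 2 + 4 * t ^ 2 * Real.sin ((k : ℝ) * θ / 2) ^ 2)

/-!
If `sin (k θ / 2) = 0` for some `k`, the `k`-th term of the infimum is constantly `k`, so `L θ`
is bounded by `k`. Otherwise every term tends to infinity with `t`; as the `k`-th term is always
at least `k`, only finitely many terms can lie below a given bound, so `L θ` tends to infinity.
The vanishing of some `sin (k θ / 2)` says that some multiple of `θ / (2 π)` is an integer.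
-/

open Filter

theorem tendsto_iInf_atTop_of_cofinite {ι α β : Type*} [Nonempty ι] [ConditionallyCompleteLattice β]
    {l : Filter α} {F : ι → α → β} {a : ι → β} (hF : ∀ i, Tendsto (F i) l atTop)
    (ha : Tendsto a cofinite atTop) (haF : ∀ᶠ t in l, ∀ i, a i ≤ F i t) :
    Tendsto (fun t ↦ ⨅ i, F i t) l atTop := by
  refine tendsto_atTop.2 fun c ↦ ?_
  have finite_exceptions : {i | ¬ c ≤ a i}.Finite := ha.eventually_ge_atTop c
  have exceptions_large : ∀ᶠ t in l, ∀ i ∈ {i | ¬ c ≤ a i}, c ≤ F i t :=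
    (eventually_all_finite finite_exceptions).2 fun i _ ↦ (hF i).eventually_ge_atTop c
  filter_upwards [exceptions_large, haF] with t ht hat
  refine le_ciInf fun i ↦ ?_
  by_cases hi : c ≤ a i
  · exact hi.trans (hat i)
  · exact ht i hi

theorem exists_pnat_mul_eq_intCast_iff {K : Type*} [DivisionRing K] [CharZero K] {x : K} :
    (∃ k : ℕ+, ∃ n : ℤ, (k : K) * x = n) ↔ ∃ q : ℚ, x = q := by
  constructor
  · rintro ⟨k, n, h⟩
    have hk : (k : K) ≠ 0 := Nat.cast_ne_zero.2 k.ne_zero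
    refine ⟨(k : ℚ)⁻¹ * n, ?_⟩
    push_cast
    exact (eq_inv_mul_iff_mul_eq₀ hk).2 h
  · rintro ⟨q, rfl⟩
    exact ⟨⟨q.den, q.den_pos⟩, q.num, mod_cast q.den_mul_eq_num⟩

theorem sin_mul_div_two_eq_zero_iff {x θ : ℝ} :
    Real.sin (x * θ / 2) = 0 ↔ ∃ n : ℤ, x * (θ / (2 * Real.pi)) = n := by
  have turn_eq : x * (θ / (2 * Real.pi)) = x * θ / 2 / Real.pi := by ring
  rw [Real.sin_eq_zero_iff, turn_eq]
  exact exists_congr fun n ↦ by rw [div_eq_iff Real.pi_ne_zero, eq_comm]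

theorem exists_sin_mul_div_two_eq_zero_iff {θ : ℝ} :
    (∃ k : ℕ+, Real.sin ((k : ℝ) * θ / 2) = 0) ↔ ∃ q : ℚ, θ / (2 * Real.pi) = q := by
  simp only [sin_mul_div_two_eq_zero_iff, exists_pnat_mul_eq_intCast_iff]

theorem L_le_of_sin_eq_zero {θ : ℝ} {k : ℕ+} (hk : Real.sin ((k : ℝ) * θ / 2) = 0) (t : ℝ) :
    L θ t ≤ k :=
  (ciInf_le ⟨0, Set.forall_mem_range.2 fun _ ↦ Real.sqrt_nonneg _⟩ k).trans_eq (by simp [hk])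

theorem tendsto_sqrt_add_mul_sq_atTop (a : ℝ) {b : ℝ} (hb : 0 < b) :
    Tendsto (fun t : ℝ ↦ √(a + b * t ^ 2)) atTop atTop :=
  Real.tendsto_sqrt_atTop.comp <| tendsto_atTop_add_const_left _ a <|
    (tendsto_pow_atTop two_ne_zero).const_mul_atTop hb

theorem tendsto_L_atTop {θ : ℝ} (hθ : ∀ k : ℕ+, Real.sin ((k : ℝ) * θ / 2) ≠ 0) :
    Tendsto (L θ) atTop atTop := by
  have tendsto_term (k : ℕ+) : Tendsto
      (fun t : ℝ ↦ √((k : ℝ) ^ 2 + 4 * t ^ 2 * Real.sin ((k : ℝ) * θ / 2) ^ 2)) atTop atTop := by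
    have hb : 0 < 4 * Real.sin ((k : ℝ) * θ / 2) ^ 2 := by have := hθ k; positivity
    simpa only [mul_right_comm] using tendsto_sqrt_add_mul_sq_atTop ((k : ℝ) ^ 2) hb
  have le_term (t : ℝ) (k : ℕ+) :
      (k : ℝ) ≤ √((k : ℝ) ^ 2 + 4 * t ^ 2 * Real.sin ((k : ℝ) * θ / 2) ^ 2) :=
    Real.le_sqrt_of_sq_le (le_add_of_nonneg_right (by positivity))
  have tendsto_cast : Tendsto (fun k : ℕ+ ↦ (k : ℝ)) cofinite atTop :=
    (tendsto_natCast_atTop_atTop.mono_left Nat.cofinite_eq_atTop.le).comp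
      PNat.coe_injective.tendsto_cofinite
  exact tendsto_iInf_atTop_of_cofinite tendsto_term tendsto_cast (.of_forall le_term)

theorem stmt_2 (θ : ℝ) :
    (∃ C : ℝ, ∀ t : ℝ, 0 ≤ t → L θ t ≤ C) ↔ ∃ q : ℚ, θ / (2 * Real.pi) = (q : ℝ) := by
  rw [← exists_sin_mul_div_two_eq_zero_iff]
  constructor
  · rintro ⟨C, hC⟩
    by_contra! hθ
    obtain ⟨t, hCt, ht⟩ :=
      (((tendsto_L_atTop hθ).eventually_gt_atTop C).and (eventually_ge_atTop 0)).exists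
    exact (hC t ht).not_gt hCt
  · rintro ⟨k, hk⟩
    exact ⟨k, fun t _ ↦ L_le_of_sin_eq_zero hk t⟩
end

section
/- Let p be an integer and q a positive integer with p and q coprime, and let θ = 2πp/q. Then there exists T > 0 such that for every t ≥ T, the infimum over integers k ≥ 1 of √(k² + 4 t² sin²(kθ/2)) equals q. (Equivalently: outside a compact set, the injectivity radius of the flat plane bundle over the circle with holonomy angle 2πp/q is constant, equal to q/2.) -/
/-! The `k`-th power of the screw motion moves a point at distance `t` from the axis by at least
`k`, by exactly `k` if it is a pure translation, and otherwise by an amount that tends to infinity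
with `t`. Hence, if the `n`-th power is the first pure translation, then far from the axis the
finitely many smaller powers displace by at least `n`, and the infimum is attained at `n`. For the
angle `2πp/q` with `p` and `q` coprime, the first pure translation is the `q`-th power. -/

open Filter

/-- The displacement, at distance `t` from the axis, of the `k`-th power of the screw motion of
angle `θ` and unit translation length. Rotating by `k * θ` moves such a point along a chord of
length `2 * t * |sin (k * θ / 2)|`, orthogonally to the translation by `k`. -/
noncomputable def screwDisplacement (θ t : ℝ) (k : ℕ) : ℝ :=
  √((k : ℝ) ^ 2 + 4 * t ^ 2 * Real.sin (k * θ / 2) ^ 2)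

section Displacement

variable {θ : ℝ}

lemma natCast_le_screwDisplacement (θ t : ℝ) (k : ℕ) : (k : ℝ) ≤ screwDisplacement θ t k :=
  Real.le_sqrt_of_sq_le (le_add_of_nonneg_right (by positivity))

lemma screwDisplacement_of_sin_eq_zero {k : ℕ} (hk : Real.sin (k * θ / 2) = 0) (t : ℝ) :
    screwDisplacement θ t k = k := by
  simp [screwDisplacement, hk]

lemma tendsto_screwDisplacement_atTop {k : ℕ} (hk : Real.sin (k * θ / 2) ≠ 0) :
    Tendsto (screwDisplacement θ · k) atTop atTop := by
  have hquad : Tendsto (fun t : ℝ ↦ 4 * t ^ 2 * Real.sin (k * θ / 2) ^ 2) atTop atTop :=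
    ((tendsto_pow_atTop two_ne_zero).const_mul_atTop four_pos).atTop_mul_const
      (sq_pos_of_ne_zero hk)
  exact Real.tendsto_sqrt_atTop.comp (tendsto_atTop_add_const_left _ _ hquad)

lemma L_le_screwDisplacement (θ t : ℝ) (k : ℕ+) : L θ t ≤ screwDisplacement θ t k :=
  ciInf_le ⟨0, Set.forall_mem_range.2 fun _ ↦ Real.sqrt_nonneg _⟩ k

lemma le_L_iff {a t : ℝ} : a ≤ L θ t ↔ ∀ k : ℕ+, a ≤ screwDisplacement θ t k :=
  ⟨fun h k ↦ h.trans (L_le_screwDisplacement θ t k), le_ciInf⟩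

lemma eventually_natCast_le_L {n : ℕ}
    (hn : ∀ k : ℕ+, (k : ℕ) < n → Real.sin (k * θ / 2) ≠ 0) :
    ∀ᶠ t in atTop, (n : ℝ) ≤ L θ t := by
  have hsmall : ∀ᶠ t in atTop, ∀ k ∈ {k : ℕ+ | (k : ℕ) < n}, (n : ℝ) ≤ screwDisplacement θ t k :=
    (eventually_all_finite ((Set.finite_Iio n).preimage PNat.coe_injective.injOn)).2 fun k hk ↦
      (tendsto_screwDisplacement_atTop (hn k hk)).eventually_ge_atTop _
  filter_upwards [hsmall] with t ht
  refine le_L_iff.2 fun k ↦ (lt_or_ge (k : ℕ) n).elim (ht k) fun hk ↦ ?_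
  exact (Nat.cast_le.2 hk).trans (natCast_le_screwDisplacement θ t k)

theorem eventually_L_eq_of_isLeast {n : ℕ+}
    (hn : IsLeast {k : ℕ+ | Real.sin (k * θ / 2) = 0} n) :
    ∀ᶠ t in atTop, L θ t = n := by
  have hlower : ∀ᶠ t in atTop, ((n : ℕ) : ℝ) ≤ L θ t :=
    eventually_natCast_le_L fun k hkn hk ↦ (hn.2 hk).not_gt hkn
  filter_upwards [hlower] with t ht
  refine le_antisymm ?_ ht
  exact (L_le_screwDisplacement θ t n).trans_eq (screwDisplacement_of_sin_eq_zero hn.1 t)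

end Displacement

lemma sin_int_mul_pi_div_eq_zero_iff {a q : ℤ} (hq : q ≠ 0) :
    Real.sin (a * Real.pi / q) = 0 ↔ q ∣ a := by
  have hq' : (q : ℝ) ≠ 0 := Int.cast_ne_zero.2 hq
  rw [Real.sin_eq_zero_iff]
  refine exists_congr fun n ↦ ?_
  calc (n : ℝ) * Real.pi = a * Real.pi / q
      ↔ (q * n : ℝ) * Real.pi = a * Real.pi := by
        rw [eq_div_iff hq', mul_right_comm, mul_comm (q : ℝ)]
    _ ↔ (a : ℝ) = q * n := by rw [mul_left_inj' Real.pi_ne_zero, eq_comm]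
    _ ↔ a = q * n := by norm_cast

lemma sin_mul_two_pi_mul_div_div_two_eq_zero_iff {p q k : ℤ} (hq : q ≠ 0) (hpq : IsCoprime p q) :
    Real.sin (k * (2 * Real.pi * p / q) / 2) = 0 ↔ q ∣ k := by
  have harg : (k * (2 * Real.pi * p / q) / 2 : ℝ) = (k * p : ℤ) * Real.pi / q := by
    push_cast
    ring
  rw [harg, sin_int_mul_pi_div_eq_zero_iff hq]
  exact ⟨hpq.symm.dvd_of_dvd_mul_right, fun h ↦ h.mul_right p⟩

lemma isLeast_sin_mul_two_pi_mul_div_eq_zero {p : ℤ} {q : ℕ+} (hpq : IsCoprime p q) :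
    IsLeast {k : ℕ+ | Real.sin (k * (2 * Real.pi * p / q) / 2) = 0} q := by
  have hzero (k : ℕ+) : Real.sin (k * (2 * Real.pi * p / q) / 2) = 0 ↔ q ∣ k := by
    rw [PNat.dvd_iff, ← Int.natCast_dvd_natCast]
    exact_mod_cast sin_mul_two_pi_mul_div_div_two_eq_zero_iff (k := k)
      (Int.natCast_ne_zero.2 q.ne_zero) hpq
  exact ⟨(hzero q).2 dvd_rfl, fun k hk ↦ PNat.le_of_dvd ((hzero k).1 hk)⟩

theorem stmt_3 (p : ℤ) (q : ℕ) (hq : 0 < q) (hpq : Nat.Coprime p.natAbs q) :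
    ∃ T : ℝ, 0 < T ∧ ∀ t : ℝ, T ≤ t → L (2 * Real.pi * p / q) t = q := by
  lift q to ℕ+ using hq
  have hcop : IsCoprime p q := Int.isCoprime_iff_gcd_eq_one.2 hpq
  have hL : ∀ᶠ t in atTop, L (2 * Real.pi * p / q) t = q :=
    eventually_L_eq_of_isLeast (isLeast_sin_mul_two_pi_mul_div_eq_zero hcop)
  obtain ⟨T, hT⟩ := ((eventually_gt_atTop (0 : ℝ)).and hL).exists_forall_of_atTop
  exact ⟨T, (hT T le_rfl).1, fun t ht ↦ (hT t ht).2⟩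
end

section
/- Let ξ be a real number that is irrational and algebraic over ℚ, let θ = 2πξ, and let α ∈ (0, 1/2). Then there exist positive constants T and C, depending only on ξ and α, such that for every t > T, the infimum over integers k ≥ 1 of √(k² + 4 t² sin²(kθ/2)) is at least 2 C t^α. (Equivalently: the injectivity radius of the corresponding flat plane bundle at distance t from the soul is at least C t^α.) -/
/-!
Since `|sin (π y)|` is at least the distance from `y` to the nearest integer, `L (2πξ) t` is small
only if `k ξ` is close to an integer for some `k < t ^ α`. Roth's theorem bounds the distance from
`k ξ` to the integers below by `c k ^ (-1 - δ)` for any `δ > 0`; take `δ = 1 / α - 2`.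

Roth's theorem compares two estimates. A count of linear conditions and Siegel's lemma give an
integral polynomial `P` in `m` variables, of multidegree `r` and controlled height, whose index at
`(ξ, …, ξ)` is nearly `m / 2`. If infinitely many rationals `x` satisfied
`|ξ - x| < den x ^ (-2 - δ)`, one could choose `m` of them with rapidly increasing denominators, and
`r` such that every `den (x h) ^ r h` is about `exp H`. By Roth's lemma, some derivative of `P` of
small order does not vanish at `(x 1, …, x m)`. As a rational number with denominator
`∏ h, den (x h) ^ r h`, it is at least about `exp (-m H)` in absolute value. Taylor expansion at
`(ξ, …, ξ)` bounds it by about `exp (-(2 + δ) (m / 2) H)`, a contradiction.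

Roth's lemma is proved by induction on the number of variables. Separating off the last variable,
write `P = ∑ j, φ j (x) ψ j (y)` with the fewest terms, so that the `φ j` and the `ψ j` are linearly
independent. A suitable determinant of derivatives of `P` is then the product of generalized
Wronskians of the `φ j` and of the `ψ j`. A large index of `P` would force a large index of this
determinant, whereas its factors involve fewer variables and have small index by induction.
-/

namespace Roth

/-! ### Integral polynomials in one variable -/

section RootMultiplicity
open Polynomial

lemma isPrimitive_den_mul_X_sub_num_pow (x : ℚ) (n : ℕ) :
    ((C (x.den : ℤ) * X - C x.num : ℤ[X]) ^ n).IsPrimitive := by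
  induction n with
  | zero => simp
  | succ n ih =>
    refine pow_succ (C (x.den : ℤ) * X - C x.num) n ▸ ih.mul fun r hr => ?_
    rw [C_dvd_iff_dvd_coeff] at hr
    have hnum : r ∣ x.num := by
      simpa only [coeff_sub, coeff_C_mul, coeff_X_zero, mul_zero, coeff_C_zero, zero_sub,
        dvd_neg] using hr 0
    have hden : r ∣ x.den := by
      simpa only [coeff_sub, coeff_C_mul, coeff_X_one, mul_one, coeff_C, one_ne_zero, if_false,
        sub_zero] using hr 1
    exact (Int.isCoprime_iff_nat_coprime.mpr x.reduced).isUnit_of_dvd' hnum hden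

lemma den_pow_rootMultiplicity_dvd_leadingCoeff (p : ℤ[X]) (x : ℚ) :
    (x.den : ℤ) ^ (p.map (Int.castRingHom ℚ)).rootMultiplicity x ∣ p.leadingCoeff := by
  set n := (p.map (Int.castRingHom ℚ)).rootMultiplicity x
  have hden : (x.den : ℚ) ≠ 0 := Nat.cast_ne_zero.mpr x.den_nz
  have hlinear : (C (x.den : ℤ) * X - C x.num : ℤ[X]).map (Int.castRingHom ℚ) =
      C (x.den : ℚ) * (X - C x) := by
    rw [mul_sub, ← C_mul, Rat.den_mul_eq_num]
    simp
  have hdvd : (C (x.den : ℤ) * X - C x.num : ℤ[X]) ^ n ∣ p := by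
    refine (IsPrimitive.Int.dvd_iff_map_cast_dvd_map_cast _ _
      (isPrimitive_den_mul_X_sub_num_pow x n)).mpr ?_
    rw [Polynomial.map_pow, hlinear, mul_pow, ← C_pow,
      (isUnit_C.mpr (IsUnit.mk0 _ (pow_ne_zero n hden))).mul_left_dvd]
    exact pow_rootMultiplicity_dvd _ _
  have hlead : (C (x.den : ℤ) * X - C x.num : ℤ[X]).leadingCoeff = x.den := by
    rw [sub_eq_add_neg, ← C_neg]
    exact leadingCoeff_linear (by exact_mod_cast x.den_nz)
  simpa only [leadingCoeff_pow, hlead] using leadingCoeff_dvd_leadingCoeff hdvd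

end RootMultiplicity

section AlgebraicPowers
open Polynomial

lemma degree_X_mul_sub_C_coeff_mul_lt {R : Type*} [CommRing R] {g p : R[X]} (hg : g.Monic)
    (hdeg : 0 < g.natDegree) (hp : p.degree < (g.natDegree : WithBot ℕ)) :
    (X * p - C (p.coeff (g.natDegree - 1)) * g).degree < (g.natDegree : WithBot ℕ) := by
  refine (degree_lt_iff_coeff_zero _ _).mpr fun l hl => ?_
  obtain ⟨l, rfl⟩ : ∃ k, l = k + 1 := ⟨l - 1, by omega⟩
  rw [coeff_sub, coeff_X_mul, coeff_C_mul]
  rcases hl.eq_or_lt with heq | hlt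
  · rw [← heq, hg.coeff_natDegree, mul_one, sub_eq_zero]
    exact congrArg p.coeff (by omega)
  · rw [coeff_eq_zero_of_natDegree_lt hlt,
      (degree_lt_iff_coeff_zero _ _).mp hp l (by omega), mul_zero, sub_zero]

lemma abs_coeff_X_mul_sub_C_coeff_mul_le {g p : ℤ[X]} {H M : ℝ}
    (hg : ∀ l, |(g.coeff l : ℝ)| ≤ H) (hp : ∀ l, |(p.coeff l : ℝ)| ≤ M) (k l : ℕ) :
    |((X * p - C (p.coeff k) * g).coeff l : ℝ)| ≤ M * (1 + H) := by
  have hM : 0 ≤ M := (abs_nonneg _).trans (hp 0)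
  have hshift : |((X * p).coeff l : ℝ)| ≤ M := by
    cases l with
    | zero => rwa [coeff_X_mul_zero, Int.cast_zero, abs_zero]
    | succ l => rw [coeff_X_mul]; exact hp l
  rw [coeff_sub, coeff_C_mul, Int.cast_sub, Int.cast_mul]
  calc |((X * p).coeff l : ℝ) - p.coeff k * g.coeff l|
      ≤ |((X * p).coeff l : ℝ)| + |(p.coeff k : ℝ)| * |(g.coeff l : ℝ)| := by
        rw [← abs_mul]
        exact abs_sub _ _
    _ ≤ M + M * H := by
        gcongr
        exacts [hp k, hg l]
    _ = M * (1 + H) := by ring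

lemma exists_aeval_eq_pow_of_isIntegral {K : Type*} [CommRing K] [Nontrivial K] {η : K}
    (hη : IsIntegral ℤ η) :
    ∃ A : ℝ, 1 ≤ A ∧ ∀ n : ℕ, ∃ p : ℤ[X], p.degree < ((minpoly ℤ η).natDegree : WithBot ℕ) ∧
      aeval η p = η ^ n ∧ ∀ l, |(p.coeff l : ℝ)| ≤ A ^ n := by
  set g := minpoly ℤ η with hg
  obtain ⟨H, hH₀, hH⟩ : ∃ H : ℝ, 0 ≤ H ∧ ∀ l, |(g.coeff l : ℝ)| ≤ H := by
    refine ⟨∑ i ∈ g.support, |(g.coeff i : ℝ)|, by positivity, fun l => ?_⟩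
    by_cases hl : l ∈ g.support
    · exact Finset.single_le_sum (f := fun i => |(g.coeff i : ℝ)|) (fun _ _ => abs_nonneg _) hl
    · rw [notMem_support_iff.mp hl, Int.cast_zero, abs_zero]
      positivity
  refine ⟨1 + H, by linarith, fun n => ?_⟩
  induction n with
  | zero =>
    refine ⟨1, ?_, by rw [map_one, pow_zero], fun l => ?_⟩
    · rw [degree_one]
      exact_mod_cast minpoly.natDegree_pos hη
    · rw [coeff_one]
      split_ifs <;> simp
  | succ n ih =>
    obtain ⟨p, hdeg, hp, hcoeff⟩ := ih
    refine ⟨X * p - C (p.coeff (g.natDegree - 1)) * g,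
      degree_X_mul_sub_C_coeff_mul_lt (minpoly.monic hη) (minpoly.natDegree_pos hη) hdeg, ?_,
      fun l => ?_⟩
    · rw [map_sub, map_mul, map_mul, aeval_X, hp, hg, minpoly.aeval, mul_zero, sub_zero, pow_succ']
    · rw [pow_succ]
      exact abs_coeff_X_mul_sub_C_coeff_mul_le hH hcoeff _ l

lemma exists_pow_mul_pow_eq_sum_of_isAlgebraic {ξ : ℝ} (hξ : IsAlgebraic ℤ ξ) :
    ∃ (d : ℕ) (A : ℝ) (a : ℤ) (b : Fin d → ℝ), 0 < d ∧ 1 ≤ A ∧ a ≠ 0 ∧ ∀ N n : ℕ, n ≤ N →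
      ∃ v : Fin d → ℤ, (∀ l, |(v l : ℝ)| ≤ A ^ N) ∧ (a : ℝ) ^ N * ξ ^ n = ∑ l, v l * b l := by
  obtain ⟨a, ha, hη⟩ := hξ.exists_integral_multiple
  rw [zsmul_eq_mul] at hη
  obtain ⟨A, hA, hpow⟩ := exists_aeval_eq_pow_of_isIntegral hη
  have haA : 1 ≤ max A |(a : ℝ)| := hA.trans (le_max_left _ _)
  refine ⟨_, max A |(a : ℝ)|, a, fun l => (a * ξ) ^ (l : ℕ), minpoly.natDegree_pos hη, haA, ha,
    fun N n hn => ?_⟩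
  obtain ⟨p, hdeg, hp, hcoeff⟩ := hpow n
  refine ⟨fun l => a ^ (N - n) * p.coeff l, fun l => ?_, ?_⟩
  · rw [Int.cast_mul, Int.cast_pow, abs_mul, abs_pow]
    calc |(a : ℝ)| ^ (N - n) * |(p.coeff l : ℝ)|
        ≤ max A |(a : ℝ)| ^ (N - n) * max A |(a : ℝ)| ^ n := by
          gcongr
          · exact le_max_right _ _
          · exact (hcoeff l).trans (pow_le_pow_left₀ (by linarith) (le_max_left _ _) n)
      _ = max A |(a : ℝ)| ^ N := by rw [← pow_add, Nat.sub_add_cancel hn]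
  · have hsum : ((a : ℝ) * ξ) ^ n = ∑ l : Fin (minpoly ℤ ((a : ℝ) * ξ)).natDegree,
        p.coeff l * (a * ξ) ^ (l : ℕ) := by
      rw [← hp, aeval_def, eval₂_eq_sum,
        ← sum_fin (fun l c => algebraMap ℤ ℝ c * (a * ξ) ^ l) (by simp) hdeg]
      rfl
    calc (a : ℝ) ^ N * ξ ^ n = a ^ (N - n) * (a * ξ) ^ n := by
          rw [mul_pow, ← mul_assoc, ← pow_add, Nat.sub_add_cancel hn]
      _ = _ := by
          rw [hsum, Finset.mul_sum]
          push_cast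
          simp only [mul_assoc]

end AlgebraicPowers

/-! ### Hasse derivatives and translations -/

open MvPolynomial

lemma exists_eq_add_single_of_degree_eq_succ {σ : Type*} {μ : σ →₀ ℕ} {n : ℕ}
    (h : μ.degree = n + 1) :
    ∃ (ν : σ →₀ ℕ) (i : σ), μ = ν + Finsupp.single i 1 ∧ ν.degree = n := by
  have hμ : μ ≠ 0 := by rintro rfl; simp at h
  obtain ⟨i, hi⟩ := Finsupp.ne_iff.mp hμ
  obtain ⟨ν, rfl⟩ := exists_add_of_le
    (Finsupp.single_le_iff.mpr (Nat.one_le_iff_ne_zero.mpr hi))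
  refine ⟨ν, i, add_comm _ _, ?_⟩
  rw [map_add, Finsupp.degree_single] at h
  omega

section HasseDeriv

variable {σ R : Type*} [Fintype σ] [CommRing R]

/-- The multi-index binomial coefficient `∏ h, (s h).choose (μ h)`. -/
def finsuppChoose (s μ : σ →₀ ℕ) : ℕ := ∏ h, (s h).choose (μ h)

lemma finsuppChoose_eq_zero_of_not_le {s μ : σ →₀ ℕ} (h : ¬ μ ≤ s) :
    finsuppChoose s μ = 0 := by
  obtain ⟨i, hi⟩ : ∃ i, s i < μ i := by simpa [Finsupp.le_def] using h
  exact Finset.prod_eq_zero (Finset.mem_univ i) (Nat.choose_eq_zero_of_lt hi)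

@[simp] lemma finsuppChoose_zero_right (s : σ →₀ ℕ) : finsuppChoose s 0 = 1 := by
  simp [finsuppChoose]

@[simp] lemma finsuppChoose_self (s : σ →₀ ℕ) : finsuppChoose s s = 1 := by
  simp [finsuppChoose]

lemma finsuppChoose_le_two_pow (s μ : σ →₀ ℕ) : finsuppChoose s μ ≤ 2 ^ s.degree := by
  rw [Finsupp.degree_eq_sum, ← Finset.prod_pow_eq_pow_sum]
  exact Finset.prod_le_prod' fun i _ => Nat.choose_le_two_pow _ _

lemma finsuppChoose_add_single (t μ : σ →₀ ℕ) (i : σ) :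
    finsuppChoose (t + μ + Finsupp.single i 1) μ * (t i + 1) =
      (μ i + 1) * finsuppChoose (t + μ + Finsupp.single i 1) (μ + Finsupp.single i 1) := by
  classical
  have hrest : ∏ h ∈ Finset.univ.erase i, ((t + μ + Finsupp.single i 1 : σ →₀ ℕ) h).choose
      ((μ + Finsupp.single i 1 : σ →₀ ℕ) h) = ∏ h ∈ Finset.univ.erase i,
        ((t + μ + Finsupp.single i 1 : σ →₀ ℕ) h).choose (μ h) :=
    Finset.prod_congr rfl fun h hh => by
      simp [(Finset.ne_of_mem_erase hh).symm]
  have hchoose : (t i + μ i + 1).choose (μ i) * (t i + 1) =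
      (μ i + 1) * (t i + μ i + 1).choose (μ i + 1) := by
    rw [mul_comm (μ i + 1), Nat.choose_succ_right_eq, show t i + μ i + 1 - μ i = t i + 1 by omega]
  simp only [finsuppChoose]
  rw [← Finset.mul_prod_erase _ _ (Finset.mem_univ i),
    ← Finset.mul_prod_erase _ _ (Finset.mem_univ i), hrest]
  simp only [Finsupp.add_apply, Finsupp.single_eq_same]
  rw [mul_right_comm, hchoose, mul_assoc]

/-- The multivariate Hasse derivative `(μ!)⁻¹ ∂^μ`, defined on monomials by
`X ^ s ↦ (s.choose μ) X ^ (s - μ)` so as to make sense over every ring. -/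
noncomputable def hasseDeriv (μ : σ →₀ ℕ) : MvPolynomial σ R →ₗ[R] MvPolynomial σ R :=
  (basisMonomials σ R).constr R fun s => monomial (s - μ) (finsuppChoose s μ : R)

lemma hasseDeriv_monomial (μ s : σ →₀ ℕ) (c : R) :
    hasseDeriv μ (monomial s c) = monomial (s - μ) (c * finsuppChoose s μ) := by
  have hbasis := (basisMonomials σ R).constr_basis R
    (fun s => monomial (s - μ) (finsuppChoose s μ : R)) s
  rw [coe_basisMonomials] at hbasis
  rw [← mul_one c, ← smul_eq_mul, ← smul_monomial, map_smul, hasseDeriv, hbasis, smul_monomial,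
    smul_eq_mul, smul_eq_mul, mul_one]

lemma coeff_hasseDeriv (μ t : σ →₀ ℕ) (P : MvPolynomial σ R) :
    coeff t (hasseDeriv μ P) = coeff (t + μ) P * finsuppChoose (t + μ) μ := by
  classical
  induction P using MvPolynomial.induction_on' with
  | monomial s c =>
    rw [hasseDeriv_monomial, coeff_monomial, coeff_monomial]
    by_cases hs : s = t + μ
    · subst hs; simp
    · rw [if_neg hs, zero_mul]
      split_ifs with h
      · have hle : ¬ μ ≤ s := fun hle => hs (by rw [← h, tsub_add_cancel_of_le hle])
        simp [finsuppChoose_eq_zero_of_not_le hle]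
      · rfl
  | add p q hp hq => rw [map_add, coeff_add, coeff_add, hp, hq, add_mul]

@[simp] lemma hasseDeriv_zero (P : MvPolynomial σ R) : hasseDeriv 0 P = P := by
  ext t; simp [coeff_hasseDeriv]

lemma hasseDeriv_map {S : Type*} [CommRing S] (f : R →+* S) (μ : σ →₀ ℕ)
    (P : MvPolynomial σ R) : hasseDeriv μ (map f P) = map f (hasseDeriv μ P) := by
  ext t; simp [coeff_hasseDeriv, coeff_map]

lemma pderiv_hasseDeriv (μ : σ →₀ ℕ) (i : σ) (P : MvPolynomial σ R) :
    pderiv i (hasseDeriv μ P) =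
      ((μ i + 1 : ℕ) : R) • hasseDeriv (μ + Finsupp.single i 1) P := by
  ext t
  have h := congrArg (Nat.cast : ℕ → R) (finsuppChoose_add_single t μ i)
  rw [coeff_pderiv, coeff_hasseDeriv, coeff_smul, coeff_hasseDeriv, ← add_assoc t,
    add_right_comm t, smul_eq_mul]
  push_cast at h ⊢
  linear_combination coeff (t + μ + Finsupp.single i 1) P * h

end HasseDeriv

section Translate

variable {σ R : Type*} [CommRing R]

/-- The translate `P(X + a)` of a polynomial `P`, whose coefficients are the Hasse derivatives
of `P` at `a`. -/
noncomputable def translate (a : σ → R) : MvPolynomial σ R →ₐ[R] MvPolynomial σ R :=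
  aeval fun i => X i + C (a i)

@[simp] lemma translate_X (a : σ → R) (i : σ) : translate a (X i) = X i + C (a i) := by
  simp [translate]

@[simp] lemma translate_C (a : σ → R) (c : R) : translate a (C c) = C c := by
  simp [translate, MvPolynomial.algebraMap_eq]

lemma translate_translate (a b : σ → R) (P : MvPolynomial σ R) :
    translate a (translate b P) = translate (a + b) P := by
  have : (translate a).comp (translate b) = translate (a + b) :=
    MvPolynomial.algHom_ext fun i => by simp [add_assoc]
  exact DFunLike.congr_fun this P

@[simp] lemma translate_zero (P : MvPolynomial σ R) : translate 0 P = P := by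
  have : translate (0 : σ → R) = AlgHom.id R _ := MvPolynomial.algHom_ext fun i => by simp
  simp [this]

lemma translate_injective (a : σ → R) : Function.Injective (translate a) :=
  Function.LeftInverse.injective (g := translate (-a)) fun P => by simp [translate_translate]

lemma coeff_zero_translate (a : σ → R) (P : MvPolynomial σ R) :
    coeff 0 (translate a P) = eval a P := by
  have h : (constantCoeff (R := R) (σ := σ)).comp (translate a).toRingHom = eval a :=
    MvPolynomial.ringHom_ext (by simp) (by simp)
  simpa [constantCoeff_eq] using DFunLike.congr_fun h P

lemma pderiv_translate (a : σ → R) (i : σ) (P : MvPolynomial σ R) :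
    pderiv i (translate a P) = translate a (pderiv i P) := by
  classical
  induction P using MvPolynomial.induction_on with
  | C c => simp
  | add p q hp hq => simp [hp, hq]
  | mul_X p j hp =>
    rcases eq_or_ne j i with rfl | h <;> simp [Derivation.leibniz, pderiv_X, *]

variable [Fintype σ] [IsDomain R] [CharZero R]

lemma hasseDeriv_translate (a : σ → R) (μ : σ →₀ ℕ) (P : MvPolynomial σ R) :
    hasseDeriv μ (translate a P) = translate a (hasseDeriv μ P) := by
  induction hn : μ.degree generalizing μ with
  | zero => simp [(Finsupp.degree_eq_zero_iff μ).mp hn]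
  | succ n ih =>
    obtain ⟨ν, i, rfl, hν⟩ := exists_eq_add_single_of_degree_eq_succ hn
    have h := pderiv_hasseDeriv ν i (translate a P)
    rw [ih ν hν, pderiv_translate, pderiv_hasseDeriv, map_smul] at h
    exact (smul_right_injective _ (Nat.cast_ne_zero.mpr (ν i).succ_ne_zero) h).symm

lemma coeff_translate (a : σ → R) (μ : σ →₀ ℕ) (P : MvPolynomial σ R) :
    coeff μ (translate a P) = eval a (hasseDeriv μ P) := by
  rw [← coeff_zero_translate, ← hasseDeriv_translate, coeff_hasseDeriv]
  simp

end Translate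

/-! ### Generalized Wronskians -/

section LinearAlgebra

variable {F V : Type*} [Field F] [AddCommGroup V] [Module F V] [FiniteDimensional F V]

lemma exists_eq_succ_of_antitone {A : ℕ → Submodule F V} (hA : Antitone A) :
    ∃ n ≤ Module.finrank F V, A n = A (n + 1) := by
  by_contra! hne
  have hrank : ∀ n ≤ Module.finrank F V + 1, Module.finrank F (A n) + n ≤ Module.finrank F V := by
    intro n
    induction n with
    | zero => exact fun _ => Submodule.finrank_le _
    | succ n ih =>
      intro hn
      have hlt := Submodule.finrank_lt_finrank_of_lt
        ((hA (Nat.le_add_right n 1)).lt_of_ne (hne n (by omega)).symm)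
      have := ih (by omega)
      omega
  have := hrank _ le_rfl
  omega

lemma le_of_antitone_of_stationary {A : ℕ → Submodule F V} (hA : Antitone A)
    (hstat : ∀ n, A n = A (n + 1) → A (n + 1) = A (n + 2)) (m : ℕ) :
    A (Module.finrank F V) ≤ A m := by
  obtain ⟨n, hn, hnn⟩ := exists_eq_succ_of_antitone hA
  have hsucc : ∀ d, A (n + d) = A (n + d + 1) := fun d => by
    induction d with
    | zero => exact hnn
    | succ d ih => exact hstat _ ih
  have hconst : ∀ d, A n = A (n + d) := fun d => by
    induction d with
    | zero => rfl
    | succ d ih => exact ih.trans (hsucc d)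
  calc A (Module.finrank F V) ≤ A n := hA hn
    _ = A (n + m) := hconst m
    _ ≤ A m := hA (by omega)

lemma exists_det_ne_zero_of_dotProduct {ι n : Type*} [Fintype n] [DecidableEq n] (v : ι → n → F)
    (S : Set ι) (h : ∀ c : n → F, (∀ i ∈ S, c ⬝ᵥ v i = 0) → c = 0) :
    ∃ e : n → ι, (∀ j, e j ∈ S) ∧ (Matrix.of fun j => v (e j)).det ≠ 0 := by
  have hspan : Submodule.span F (v '' S) = ⊤ := by
    by_contra hne
    obtain ⟨f, hf0, hf⟩ := Submodule.exists_le_ker_of_lt_top _ (lt_top_iff_ne_top.mpr hne)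
    obtain ⟨c, rfl⟩ := (dotProductEquiv F n).surjective f
    have hc : c = 0 := h c fun i hi =>
      LinearMap.mem_ker.mp (hf (Submodule.subset_span ⟨i, hi, rfl⟩))
    exact hf0 (by rw [hc, map_zero])
  obtain ⟨f, hfS, -, hf⟩ := Submodule.exists_fun_fin_finrank_span_eq F (v '' S)
  have hcard : Fintype.card n = Module.finrank F (Submodule.span F (v '' S)) := by
    rw [hspan, finrank_top, Module.finrank_fintype_fun_eq_card]
  choose e heS hev using fun j => hfS (Fintype.equivFinOfCardEq hcard j)
  refine ⟨e, heS, ?_⟩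
  rw [← isUnit_iff_ne_zero, ← Matrix.isUnit_iff_isUnit_det,
    ← Matrix.linearIndependent_rows_iff_isUnit]
  have hrow : (Matrix.of fun j => v (e j)).row = f ∘ Fintype.equivFinOfCardEq hcard := funext hev
  exact hrow ▸ hf.comp _ (Fintype.equivFinOfCardEq hcard).injective

lemma exists_smul_eq_algebraMap_comp (A : Type*) [CommRing A] [IsDomain A] [Algebra A F]
    [IsFractionRing A F] {ι : Type*} [Finite ι] (c : ι → F) :
    ∃ (b : F) (p : ι → A), b ≠ 0 ∧ b • c = algebraMap A F ∘ p := by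
  obtain ⟨b, hb⟩ := IsLocalization.exist_integer_multiples_of_finite (nonZeroDivisors A) c
  choose p hp using hb
  refine ⟨algebraMap A F b, p, ?_, funext fun j => ?_⟩
  · exact IsFractionRing.to_map_ne_zero_of_mem_nonZeroDivisors b.2
  · rw [Function.comp_apply, hp j, Pi.smul_apply, smul_eq_mul, Algebra.smul_def]

end LinearAlgebra

section Wronskian

variable {σ R : Type*} [Fintype σ] [CommRing R] {k : ℕ}

lemma sum_pderiv_mul_hasseDeriv {φ c : Fin k → MvPolynomial σ R} {μ : σ →₀ ℕ}
    (h : ∑ j, c j * hasseDeriv μ (φ j) = 0) (i : σ) :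
    ∑ j, pderiv i (c j) * hasseDeriv μ (φ j) +
      ((μ i + 1 : ℕ) : R) • ∑ j, c j * hasseDeriv (μ + Finsupp.single i 1) (φ j) = 0 := by
  have hd := congrArg (pderiv i) h
  rw [map_sum, map_zero] at hd
  rw [← hd, Finset.smul_sum, ← Finset.sum_add_distrib]
  refine Finset.sum_congr rfl fun j _ => ?_
  rw [Derivation.leibniz, pderiv_hasseDeriv, smul_eq_mul, smul_eq_mul, mul_smul_comm]
  ring

variable (F : Type*) [Field F] [Algebra (MvPolynomial σ R) F]

/-- The vectors over the field of fractions `F` that are orthogonal to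
`(hasseDeriv μ (φ j))_j` for all `μ` of order less than `n`. -/
def hasseAnnihilator (φ : Fin k → MvPolynomial σ R) (n : ℕ) : Submodule F (Fin k → F) where
  carrier := {c | ∀ μ : σ →₀ ℕ, μ.degree < n →
    c ⬝ᵥ (fun j => algebraMap (MvPolynomial σ R) F (hasseDeriv μ (φ j))) = 0}
  add_mem' ha hb μ hμ := by rw [add_dotProduct, ha μ hμ, hb μ hμ, add_zero]
  zero_mem' μ _ := zero_dotProduct _
  smul_mem' r c hc μ hμ := by rw [smul_dotProduct, hc μ hμ, smul_zero]

lemma hasseAnnihilator_antitone (φ : Fin k → MvPolynomial σ R) :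
    Antitone (hasseAnnihilator F φ) :=
  fun _ _ hmn _ hc μ hμ => hc μ (hμ.trans_le hmn)

variable [IsFractionRing (MvPolynomial σ R) F]

variable {F} in
lemma algebraMap_comp_mem_hasseAnnihilator {φ p : Fin k → MvPolynomial σ R} {n : ℕ} :
    algebraMap _ F ∘ p ∈ hasseAnnihilator F φ n ↔
      ∀ μ : σ →₀ ℕ, μ.degree < n → ∑ j, p j * hasseDeriv μ (φ j) = 0 := by
  refine forall₂_congr fun μ _ => ?_
  rw [← map_eq_zero_iff _ (IsFractionRing.injective (MvPolynomial σ R) F), map_sum]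
  simp only [dotProduct, Function.comp_apply, map_mul]

variable [IsDomain R] [CharZero R]

lemma hasseAnnihilator_stationary (φ : Fin k → MvPolynomial σ R) (n : ℕ)
    (h : hasseAnnihilator F φ n = hasseAnnihilator F φ (n + 1)) :
    hasseAnnihilator F φ (n + 1) = hasseAnnihilator F φ (n + 2) := by
  refine le_antisymm (fun c hc => ?_) (hasseAnnihilator_antitone F φ (n + 1).le_succ)
  obtain ⟨b, p, hb, hbp⟩ := exists_smul_eq_algebraMap_comp (MvPolynomial σ R) c
  rw [← Submodule.smul_mem_iff _ hb, hbp, algebraMap_comp_mem_hasseAnnihilator] at hc ⊢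
  -- Differentiating the relations of order `≤ n` shows that `∂ᵢ p` satisfies those of order `< n`.
  have hpderiv : ∀ (i : σ) (μ : σ →₀ ℕ), μ.degree < n + 1 →
      ∑ j, pderiv i (p j) * hasseDeriv μ (φ j) = 0 := fun i => by
    refine (algebraMap_comp_mem_hasseAnnihilator (F := F)).mp
      (h ▸ algebraMap_comp_mem_hasseAnnihilator.mpr fun μ hμ => ?_)
    have hi := sum_pderiv_mul_hasseDeriv (hc μ (by omega)) i
    rwa [hc (μ + Finsupp.single i 1) (by rw [map_add, Finsupp.degree_single]; omega), smul_zero,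
      add_zero] at hi
  intro μ hμ
  rcases (Nat.lt_succ_iff.mp hμ).lt_or_eq with hlt | heq
  · exact hc μ hlt
  · obtain ⟨ν, i, rfl, hν⟩ := exists_eq_add_single_of_degree_eq_succ heq
    have hi := sum_pderiv_mul_hasseDeriv (hc ν (by omega)) i
    rw [hpderiv i ν (by omega), zero_add] at hi
    exact (smul_eq_zero.mp hi).resolve_left (Nat.cast_ne_zero.mpr (ν i).succ_ne_zero)

lemma eq_zero_of_sum_mul_hasseDeriv_eq_zero {φ p : Fin k → MvPolynomial σ R}
    (hφ : LinearIndependent R φ) (hp : ∀ μ : σ →₀ ℕ, ∑ j, p j * hasseDeriv μ (φ j) = 0) :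
    p = 0 := by
  refine funext fun j => MvPolynomial.funext fun a => ?_
  have hrel : ∑ j, eval a (p j) • φ j = 0 := translate_injective a <| by
    ext μ
    have := congrArg (eval a) (hp μ)
    simpa only [coeff_sum, coeff_smul, coeff_translate, map_sum, map_mul, map_smul, smul_eq_mul,
      map_zero, coeff_zero] using this
  simpa using Fintype.linearIndependent_iff.mp hφ _ hrel j

lemma hasseAnnihilator_eq_bot {φ : Fin k → MvPolynomial σ R} (hφ : LinearIndependent R φ) :
    hasseAnnihilator F φ k = ⊥ := by
  refine (Submodule.eq_bot_iff _).mpr fun c hc => ?_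
  obtain ⟨b, p, hb, hbp⟩ := exists_smul_eq_algebraMap_comp (MvPolynomial σ R) c
  have hmem : ∀ m, c ∈ hasseAnnihilator F φ m := fun m => by
    refine le_of_antitone_of_stationary (hasseAnnihilator_antitone F φ)
      (hasseAnnihilator_stationary F φ) m ?_
    rwa [Module.finrank_fin_fun]
  have hp : p = 0 := eq_zero_of_sum_mul_hasseDeriv_eq_zero hφ fun μ =>
    algebraMap_comp_mem_hasseAnnihilator.mp
      (hbp ▸ Submodule.smul_mem _ b (hmem (μ.degree + 1))) μ μ.degree.lt_succ_self
  refine (smul_eq_zero.mp (?_ : b • c = 0)).resolve_left hb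
  rw [hbp, hp]
  exact funext fun _ => map_zero _

theorem exists_generalizedWronskian_ne_zero {φ : Fin k → MvPolynomial σ R}
    (hφ : LinearIndependent R φ) :
    ∃ μ : Fin k → (σ →₀ ℕ), (∀ i, (μ i).degree < k) ∧
      (Matrix.of fun i j => hasseDeriv (μ i) (φ j)).det ≠ 0 := by
  let F := FractionRing (MvPolynomial σ R)
  obtain ⟨μ, hμ, hdet⟩ := exists_det_ne_zero_of_dotProduct
    (fun (μ : σ →₀ ℕ) j => algebraMap (MvPolynomial σ R) F (hasseDeriv μ (φ j)))
    {μ | μ.degree < k} fun c hc =>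
      (Submodule.mem_bot F).mp (hasseAnnihilator_eq_bot F hφ ▸ (hc : c ∈ hasseAnnihilator F φ k))
  refine ⟨μ, hμ, fun h => hdet ?_⟩
  have hmap := RingHom.map_det (algebraMap (MvPolynomial σ R) F)
    (Matrix.of fun i j => hasseDeriv (μ i) (φ j))
  rw [h, map_zero] at hmap
  exact hmap.symm

end Wronskian

/-! ### Weights, degrees and heights of polynomials -/

section WeightFiltration

variable {σ R : Type*} [CommRing R] {w : (σ →₀ ℕ) →+ ℝ} {c d : ℝ}

variable (R) in
/-- The polynomials all of whose monomials `X ^ s` have weight `w s` at least `c`. -/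
noncomputable def weightFiltration (w : (σ →₀ ℕ) →+ ℝ) (c : ℝ) : Submodule R (MvPolynomial σ R) :=
  restrictSupport R {s | c ≤ w s}

lemma mem_weightFiltration {P : MvPolynomial σ R} :
    P ∈ weightFiltration R w c ↔ ∀ s, coeff s P ≠ 0 → c ≤ w s := by
  simp [weightFiltration, mem_restrictSupport_iff, Set.subset_def]

lemma one_mem_weightFiltration : (1 : MvPolynomial σ R) ∈ weightFiltration R w 0 := by
  classical
  refine mem_weightFiltration.mpr fun s hs => ?_
  obtain rfl : 0 = s := by by_contra h; simp [coeff_one, h] at hs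
  simp

lemma mul_mem_weightFiltration {P Q : MvPolynomial σ R} (hP : P ∈ weightFiltration R w c)
    (hQ : Q ∈ weightFiltration R w d) : P * Q ∈ weightFiltration R w (c + d) := by
  classical
  refine mem_weightFiltration.mpr fun s hs => ?_
  rw [coeff_mul] at hs
  obtain ⟨⟨a, b⟩, hab, hne⟩ := Finset.exists_ne_zero_of_sum_ne_zero hs
  rw [← Finset.HasAntidiagonal.mem_antidiagonal.mp hab, map_add]
  exact add_le_add (mem_weightFiltration.mp hP a (left_ne_zero_of_mul hne))
    (mem_weightFiltration.mp hQ b (right_ne_zero_of_mul hne))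

lemma prod_mem_weightFiltration {ι : Type*} (T : Finset ι) {c : ι → ℝ}
    {f : ι → MvPolynomial σ R} (h : ∀ i ∈ T, f i ∈ weightFiltration R w (c i)) :
    ∏ i ∈ T, f i ∈ weightFiltration R w (∑ i ∈ T, c i) := by
  classical
  induction T using Finset.induction_on with
  | empty => simpa using one_mem_weightFiltration
  | insert a T ha ih =>
    rw [Finset.sum_insert ha, Finset.prod_insert ha]
    exact mul_mem_weightFiltration (h a (Finset.mem_insert_self _ _))
      (ih fun i hi => h i (Finset.mem_insert_of_mem hi))

lemma det_mem_weightFiltration {n : Type*} [Fintype n] [DecidableEq n] {c : n → ℝ}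
    {M : Matrix n n (MvPolynomial σ R)} (h : ∀ i j, M i j ∈ weightFiltration R w (c j)) :
    M.det ∈ weightFiltration R w (∑ j, c j) := by
  rw [Matrix.det_apply']
  refine Submodule.sum_mem _ fun τ _ => ?_
  rw [← zsmul_eq_mul]
  exact zsmul_mem (prod_mem_weightFiltration _ fun i _ => h (τ i) i) _

lemma hasseDeriv_mem_weightFiltration [Fintype σ] {P : MvPolynomial σ R}
    (hP : P ∈ weightFiltration R w c) (μ : σ →₀ ℕ) :
    hasseDeriv μ P ∈ weightFiltration R w (c - w μ) := by
  refine mem_weightFiltration.mpr fun s hs => ?_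
  rw [coeff_hasseDeriv] at hs
  have := mem_weightFiltration.mp hP _ (left_ne_zero_of_mul hs)
  rw [map_add] at this
  linarith

end WeightFiltration

section IndexWeight

variable {σ : Type*}

/-- The weight `∑ h, s h / r h` of a monomial `X ^ s`, which defines the index of a polynomial
with respect to the degrees `r`. -/
noncomputable def indexWeight (r : σ → ℕ) : (σ →₀ ℕ) →+ ℝ :=
  Finsupp.weight fun h => (r h : ℝ)⁻¹

lemma indexWeight_apply (r : σ → ℕ) (s : σ →₀ ℕ) :
    indexWeight r s = s.sum fun h n => (n : ℝ) / r h := by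
  simp only [indexWeight, Finsupp.weight_apply, nsmul_eq_mul, div_eq_mul_inv]

lemma indexWeight_eq_sum [Fintype σ] (r : σ → ℕ) (s : σ →₀ ℕ) :
    indexWeight r s = ∑ h, (s h : ℝ) / r h := by
  rw [indexWeight_apply, Finsupp.sum_fintype _ _ (by simp)]

lemma indexWeight_nonneg (r : σ → ℕ) (s : σ →₀ ℕ) : 0 ≤ indexWeight r s := by
  rw [indexWeight_apply]
  exact Finset.sum_nonneg fun h _ => by positivity

lemma indexWeight_sumElim {τ : Type*} (r : σ ⊕ τ → ℕ) (s : σ →₀ ℕ) (t : τ →₀ ℕ) :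
    indexWeight r (s.sumElim t) = indexWeight (r ∘ Sum.inl) s + indexWeight (r ∘ Sum.inr) t := by
  simp only [indexWeight_apply]
  exact Finsupp.sum_sumElim s t _

lemma indexWeight_mapDomain {τ : Type*} (f : σ → τ) (r : τ → ℕ) (s : σ →₀ ℕ) :
    indexWeight r (s.mapDomain f) = indexWeight (r ∘ f) s := by
  simp only [indexWeight_apply]
  rw [Finsupp.sum_mapDomain_index (by simp) (by simp [add_div])]
  rfl

lemma indexWeight_natMul (k : ℕ) (r : σ → ℕ) (s : σ →₀ ℕ) :
    indexWeight (fun h => k * r h) s = indexWeight r s / k := by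
  simp only [indexWeight_apply, Finsupp.sum, Nat.cast_mul, Finset.sum_div, div_div, mul_comm]

lemma indexWeight_le_degree_mul {r : σ → ℕ} {c : ℝ} (hc : ∀ h, (r h : ℝ)⁻¹ ≤ c) (s : σ →₀ ℕ) :
    indexWeight r s ≤ s.degree * c := by
  rw [indexWeight_apply, Finsupp.degree_apply, Nat.cast_sum, Finset.sum_mul]
  simp only [div_eq_mul_inv]
  refine Finset.sum_le_sum fun h _ => ?_
  exact mul_le_mul_of_nonneg_left (hc h) (Nat.cast_nonneg _)

end IndexWeight

section DegreeOf

variable {σ R : Type*} [CommRing R]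

lemma degreeOf_hasseDeriv_le [Fintype σ] (μ : σ →₀ ℕ) (P : MvPolynomial σ R) (h : σ) :
    degreeOf h (hasseDeriv μ P) ≤ degreeOf h P := by
  refine degreeOf_le_iff.mpr fun s hs => ?_
  rw [mem_support_iff, coeff_hasseDeriv] at hs
  have := degreeOf_le_iff.mp (le_refl (degreeOf h P)) _
    (mem_support_iff.mpr (left_ne_zero_of_mul hs))
  exact (Nat.le_add_right _ _).trans this

lemma degreeOf_det_le {n : Type*} [Fintype n] [DecidableEq n]
    {M : Matrix n n (MvPolynomial σ R)} {h : σ} {r : ℕ} (hM : ∀ i j, degreeOf h (M i j) ≤ r) :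
    degreeOf h M.det ≤ Fintype.card n * r := by
  rw [Matrix.det_apply']
  refine (degreeOf_sum_le h _ _).trans (Finset.sup_le fun τ _ => ?_)
  rw [← map_intCast (C : R →+* MvPolynomial σ R)]
  refine (degreeOf_C_mul_le _ _ _).trans ((degreeOf_prod_le _ _ _).trans ?_)
  exact (Finset.sum_le_sum fun i _ => hM (τ i) i).trans_eq (by simp)

end DegreeOf

section L1Norm

variable {σ R : Type*} [NormedCommRing R]

/-- The sum of the norms of the coefficients. -/
noncomputable def l1Norm (P : MvPolynomial σ R) : ℝ := ∑ s ∈ P.support, ‖coeff s P‖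

lemma l1Norm_eq_sum {P : MvPolynomial σ R} {T : Finset (σ →₀ ℕ)} (h : P.support ⊆ T) :
    l1Norm P = ∑ s ∈ T, ‖coeff s P‖ :=
  Finset.sum_subset h fun s _ hs => by rw [notMem_support_iff.mp hs, norm_zero]

lemma l1Norm_nonneg (P : MvPolynomial σ R) : 0 ≤ l1Norm P :=
  Finset.sum_nonneg fun _ _ => norm_nonneg _

lemma norm_coeff_le_l1Norm (s : σ →₀ ℕ) (P : MvPolynomial σ R) : ‖coeff s P‖ ≤ l1Norm P := by
  by_cases hs : s ∈ P.support
  · exact Finset.single_le_sum (f := fun s => ‖coeff s P‖) (fun _ _ => norm_nonneg _) hs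
  · rw [notMem_support_iff.mp hs, norm_zero]
    exact l1Norm_nonneg P

lemma l1Norm_add_le (P Q : MvPolynomial σ R) : l1Norm (P + Q) ≤ l1Norm P + l1Norm Q := by
  classical
  rw [l1Norm_eq_sum (support_add (p := P) (q := Q)),
    l1Norm_eq_sum (P := P) Finset.subset_union_left,
    l1Norm_eq_sum (P := Q) Finset.subset_union_right, ← Finset.sum_add_distrib]
  exact Finset.sum_le_sum fun s _ => norm_add_le _ _

lemma l1Norm_sum_le {ι : Type*} (T : Finset ι) (f : ι → MvPolynomial σ R) :
    l1Norm (∑ i ∈ T, f i) ≤ ∑ i ∈ T, l1Norm (f i) :=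
  Finset.le_sum_of_subadditive l1Norm (by simp [l1Norm]) l1Norm_add_le T f

lemma l1Norm_monomial (s : σ →₀ ℕ) (c : R) : l1Norm (monomial s c) = ‖c‖ := by
  classical
  rw [l1Norm_eq_sum support_monomial_subset, Finset.sum_singleton, coeff_monomial, if_pos rfl]

lemma l1Norm_le_card_mul {P : MvPolynomial σ R} {S : Finset (σ →₀ ℕ)} (hS : P.support ⊆ S)
    {M : ℝ} (hM : ∀ s, ‖coeff s P‖ ≤ M) : l1Norm P ≤ S.card * M := by
  rw [l1Norm_eq_sum hS, ← nsmul_eq_mul]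
  exact Finset.sum_le_card_nsmul _ _ _ fun s _ => hM s

lemma l1Norm_rename_le {τ : Type*} (f : σ → τ) (P : MvPolynomial σ R) :
    l1Norm (rename f P) ≤ l1Norm P := by
  conv_lhs => rw [P.as_sum, map_sum]
  refine (l1Norm_sum_le _ _).trans_eq (Finset.sum_congr rfl fun s _ => ?_)
  rw [rename_monomial, l1Norm_monomial]

lemma l1Norm_monomial_mul_le (s : σ →₀ ℕ) (c : R) (Q : MvPolynomial σ R) :
    l1Norm (monomial s c * Q) ≤ ‖c‖ * l1Norm Q := by
  conv_lhs => rw [Q.as_sum, Finset.mul_sum]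
  refine (l1Norm_sum_le _ _).trans ?_
  rw [l1Norm, Finset.mul_sum]
  refine Finset.sum_le_sum fun t _ => ?_
  rw [monomial_mul, l1Norm_monomial]
  exact norm_mul_le _ _

lemma l1Norm_mul_le (P Q : MvPolynomial σ R) : l1Norm (P * Q) ≤ l1Norm P * l1Norm Q := by
  conv_lhs => rw [P.as_sum, Finset.sum_mul]
  refine (l1Norm_sum_le _ _).trans ?_
  rw [l1Norm, Finset.sum_mul]
  exact Finset.sum_le_sum fun t _ => l1Norm_monomial_mul_le _ _ _

lemma l1Norm_prod_le [NormOneClass R] {ι : Type*} (T : Finset ι) (f : ι → MvPolynomial σ R) :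
    l1Norm (∏ i ∈ T, f i) ≤ ∏ i ∈ T, l1Norm (f i) := by
  classical
  induction T using Finset.induction_on with
  | empty => simp [← C_1, ← monomial_zero', l1Norm_monomial]
  | insert a T ha ih =>
    rw [Finset.prod_insert ha, Finset.prod_insert ha]
    exact (l1Norm_mul_le _ _).trans (mul_le_mul_of_nonneg_left ih (l1Norm_nonneg _))

lemma l1Norm_intCast_unit_mul (ε : ℤˣ) (P : MvPolynomial σ R) :
    l1Norm (((ε : ℤ) : MvPolynomial σ R) * P) = l1Norm P := by
  rcases Int.units_eq_one_or ε with rfl | rfl <;> simp [l1Norm]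

lemma l1Norm_det_le [NormOneClass R] {n : Type*} [Fintype n] [DecidableEq n]
    {M : Matrix n n (MvPolynomial σ R)} {A : ℝ} (hM : ∀ i j, l1Norm (M i j) ≤ A) :
    l1Norm M.det ≤ (Fintype.card n).factorial * A ^ Fintype.card n := by
  rw [Matrix.det_apply', ← Fintype.card_perm, ← nsmul_eq_mul, ← Finset.card_univ]
  refine (l1Norm_sum_le _ _).trans (Finset.sum_le_card_nsmul _ _ _ fun τ _ => ?_)
  rw [l1Norm_intCast_unit_mul]
  refine (l1Norm_prod_le _ _).trans ?_
  refine (Finset.prod_le_prod (fun i _ => l1Norm_nonneg _) fun i _ => hM (τ i) i).trans_eq ?_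
  rw [Finset.prod_const, Finset.card_univ]

lemma l1Norm_hasseDeriv_le [NormOneClass R] [Fintype σ] {r : σ → ℕ} {P : MvPolynomial σ R}
    (hP : ∀ h, degreeOf h P ≤ r h) (μ : σ →₀ ℕ) :
    l1Norm (hasseDeriv μ P) ≤ 2 ^ (∑ h, r h) * l1Norm P := by
  conv_lhs => rw [P.as_sum, map_sum]
  refine (l1Norm_sum_le _ _).trans ?_
  rw [l1Norm, Finset.mul_sum]
  refine Finset.sum_le_sum fun s hs => ?_
  have hdeg : s.degree ≤ ∑ h, r h := by
    rw [Finsupp.degree_eq_sum]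
    exact Finset.sum_le_sum fun h _ => degreeOf_le_iff.mp (hP h) s hs
  have hchoose : ‖(finsuppChoose s μ : R)‖ ≤ 2 ^ ∑ h, r h := by
    refine (Nat.norm_cast_le _).trans ?_
    rw [norm_one, mul_one]
    exact_mod_cast (finsuppChoose_le_two_pow s μ).trans (Nat.pow_le_pow_right two_pos hdeg)
  rw [hasseDeriv_monomial, l1Norm_monomial, mul_comm (2 ^ _)]
  exact (norm_mul_le _ _).trans (mul_le_mul_of_nonneg_left hchoose (norm_nonneg _))

end L1Norm

/-! ### Mixed Wronskians -/

section SepMul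

variable {σ τ R : Type*} [CommRing R]

/-- The product `φ(x) ψ(y)` of polynomials in two disjoint groups of variables. -/
noncomputable def sepMul :
    MvPolynomial σ R →ₗ[R] MvPolynomial τ R →ₗ[R] MvPolynomial (σ ⊕ τ) R :=
  (LinearMap.mul R _).compl₁₂ (rename Sum.inl).toLinearMap (rename Sum.inr).toLinearMap

lemma sepMul_apply (φ : MvPolynomial σ R) (ψ : MvPolynomial τ R) :
    sepMul φ ψ = rename Sum.inl φ * rename Sum.inr ψ := rfl

lemma coeff_sepMul (φ : MvPolynomial σ R) (ψ : MvPolynomial τ R) (s : σ →₀ ℕ) (t : τ →₀ ℕ) :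
    coeff (s.sumElim t) (sepMul φ ψ) = coeff s φ * coeff t ψ := by
  classical
  induction φ using MvPolynomial.induction_on' with
  | add p q hp hq => rw [map_add, LinearMap.add_apply, coeff_add, hp, hq, coeff_add, add_mul]
  | monomial a x =>
    induction ψ using MvPolynomial.induction_on' with
    | add p q hp hq => rw [map_add, coeff_add, hp, hq, coeff_add, mul_add]
    | monomial b y =>
      have hinj : a.sumElim b = s.sumElim t ↔ a = s ∧ b = t := by
        simp [Finsupp.ext_iff]
      rw [sepMul_apply, rename_monomial, rename_monomial, monomial_mul, ← Finsupp.sumElim_eq_add,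
        coeff_monomial, coeff_monomial, coeff_monomial, ite_zero_mul_ite_zero]
      simp only [hinj]

@[ext] lemma ext_sumElim {P Q : MvPolynomial (σ ⊕ τ) R}
    (h : ∀ s t, coeff (Finsupp.sumElim s t) P = coeff (Finsupp.sumElim s t) Q) : P = Q := by
  ext u
  rw [← Finsupp.comapDomain_sumElim_comapDomain u]
  exact h _ _

lemma sepMul_map {S : Type*} [CommRing S] (f : R →+* S) (φ : MvPolynomial σ R)
    (ψ : MvPolynomial τ R) : sepMul (map f φ) (map f ψ) = map f (sepMul φ ψ) := by
  simp only [sepMul_apply, map_mul, map_rename]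

lemma hasseDeriv_sepMul [Fintype σ] [Fintype τ] (μ : σ →₀ ℕ) (ν : τ →₀ ℕ)
    (φ : MvPolynomial σ R) (ψ : MvPolynomial τ R) :
    hasseDeriv (μ.sumElim ν) (sepMul φ ψ) = sepMul (hasseDeriv μ φ) (hasseDeriv ν ψ) := by
  refine ext_sumElim fun s t => ?_
  have hchoose : finsuppChoose ((s + μ).sumElim (t + ν)) (μ.sumElim ν) =
      finsuppChoose (s + μ) μ * finsuppChoose (t + ν) ν := by
    simp [finsuppChoose, Fintype.prod_sum_type]
  rw [coeff_hasseDeriv, ← Finsupp.sumElim_add, coeff_sepMul, coeff_sepMul, coeff_hasseDeriv,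
    coeff_hasseDeriv, hchoose]
  push_cast
  ring

lemma translate_rename {ι : Type*} (f : σ → ι) (a : ι → R) (P : MvPolynomial σ R) :
    translate a (rename f P) = rename f (translate (a ∘ f) P) := by
  have h : (translate a).comp (rename f) = (rename f).comp (translate (a ∘ f)) :=
    MvPolynomial.algHom_ext fun i => by simp
  exact DFunLike.congr_fun h P

lemma translate_sepMul (φ : MvPolynomial σ R) (ψ : MvPolynomial τ R) (a : σ ⊕ τ → R) :
    translate a (sepMul φ ψ) =
      sepMul (translate (a ∘ Sum.inl) φ) (translate (a ∘ Sum.inr) ψ) := by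
  simp only [sepMul_apply, map_mul, translate_rename]

end SepMul

section ComapExponents

variable {σ τ R : Type*}

/-- The polynomial whose coefficient of `X ^ t` is the coefficient of `X ^ e t` in `P`. For
`e = sumElim s` and `e = (sumElim · t)` these are the coefficients of `P` as a polynomial in one
of two groups of variables. -/
noncomputable def comapExponents [CommSemiring R] (e : (τ →₀ ℕ) ↪ (σ →₀ ℕ))
    (P : MvPolynomial σ R) : MvPolynomial τ R :=
  ∑ t ∈ P.support.preimage e e.injective.injOn, monomial t (coeff (e t) P)

@[simp] lemma coeff_comapExponents [CommSemiring R] (e : (τ →₀ ℕ) ↪ (σ →₀ ℕ))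
    (P : MvPolynomial σ R) (t : τ →₀ ℕ) : coeff t (comapExponents e P) = coeff (e t) P := by
  classical
  simp only [comapExponents, coeff_sum, coeff_monomial, Finset.sum_ite_eq', Finset.mem_preimage,
    mem_support_iff, ite_not]
  split_ifs with h
  · exact h.symm
  · rfl

lemma l1Norm_comapExponents_le [NormedCommRing R] (e : (τ →₀ ℕ) ↪ (σ →₀ ℕ))
    (P : MvPolynomial σ R) : l1Norm (comapExponents e P) ≤ l1Norm P := by
  classical
  refine (l1Norm_sum_le _ _).trans ?_
  simp only [l1Norm_monomial]
  rw [← Finset.sum_map _ e fun s => ‖coeff s P‖]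
  refine Finset.sum_le_sum_of_subset_of_nonneg ?_ fun _ _ _ => norm_nonneg _
  intro s hs
  obtain ⟨t, ht, rfl⟩ := Finset.mem_map.mp hs
  exact Finset.mem_preimage.mp ht

lemma degreeOf_comapExponents_le [CommSemiring R] (e : (τ →₀ ℕ) ↪ (σ →₀ ℕ))
    (P : MvPolynomial σ R) {i : τ} {j : σ} (h : ∀ t, t i ≤ e t j) :
    degreeOf i (comapExponents e P) ≤ degreeOf j P := by
  refine degreeOf_le_iff.mpr fun t ht => (h t).trans ?_
  rw [mem_support_iff, coeff_comapExponents] at ht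
  exact degreeOf_le_iff.mp (le_refl (degreeOf j P)) _ (mem_support_iff.mpr ht)

/-- `s ↦ (s, t)` as an embedding of exponents. -/
@[simps] def sumElimRight (t : τ →₀ ℕ) : (σ →₀ ℕ) ↪ (σ ⊕ τ →₀ ℕ) where
  toFun s := s.sumElim t
  inj' s s' h := by
    ext i
    exact DFunLike.congr_fun h (Sum.inl i)

/-- `t ↦ (s, t)` as an embedding of exponents. -/
@[simps] def sumElimLeft (s : σ →₀ ℕ) : (τ →₀ ℕ) ↪ (σ ⊕ τ →₀ ℕ) where
  toFun t := s.sumElim t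
  inj' t t' h := by
    ext i
    exact DFunLike.congr_fun h (Sum.inr i)

-- A rank-one tensor is recovered, up to the scalar in one entry, from a row and a column.
lemma sepMul_comapExponents_of_map_eq [CommRing R] {S : Type*} [CommRing S] {f : R →+* S}
    (hf : Function.Injective f) {P : MvPolynomial (σ ⊕ τ) R} {φ : MvPolynomial σ S}
    {ψ : MvPolynomial τ S} (h : map f P = sepMul φ ψ) (s : σ →₀ ℕ) (t : τ →₀ ℕ) :
    sepMul (comapExponents (sumElimRight t) P) (comapExponents (sumElimLeft s) P) =
      coeff (s.sumElim t) P • P := by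
  have hcoeff : ∀ s t, f (coeff (Finsupp.sumElim s t) P) = coeff s φ * coeff t ψ := fun s t => by
    rw [← coeff_map, h, coeff_sepMul]
  refine ext_sumElim fun s' t' => hf ?_
  simp only [coeff_sepMul, coeff_comapExponents, sumElimRight_apply, sumElimLeft_apply,
    coeff_smul, smul_eq_mul, map_mul, hcoeff]
  ring

lemma eq_sum_sepMul_of_degreeOf_le [CommRing R] {P : MvPolynomial (σ ⊕ Unit) R} {n : ℕ}
    (hP : degreeOf (Sum.inr ()) P ≤ n) :
    P = ∑ i : Fin (n + 1), sepMul (comapExponents (sumElimRight (Finsupp.single () (i : ℕ))) P)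
      (monomial (Finsupp.single () (i : ℕ)) 1) := by
  classical
  refine ext_sumElim fun s t => ?_
  obtain ⟨d, rfl⟩ : ∃ d, t = Finsupp.single () d := ⟨t (), by ext; simp⟩
  simp only [coeff_sum, coeff_sepMul, coeff_comapExponents, sumElimRight_apply, coeff_monomial,
    (Finsupp.single_injective ()).eq_iff, mul_ite, mul_one, mul_zero]
  by_cases hd : d < n + 1
  · rw [Finset.sum_eq_single (⟨d, hd⟩ : Fin (n + 1)) (fun i _ hi =>
      if_neg fun h => hi (Fin.ext h)) (by simp), if_pos rfl]
  · rw [Finset.sum_eq_zero fun i _ => if_neg fun h => hd (lt_of_eq_of_lt (Eq.symm h) i.isLt)]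
    by_contra hne
    have := degreeOf_le_iff.mp hP _ (mem_support_iff.mpr hne)
    simp only [Finsupp.sumElim_inr, Finsupp.single_eq_same] at this
    omega

end ComapExponents

section Rank

variable {K M N Q : Type*} [Field K] [AddCommGroup M] [Module K M] [AddCommGroup N] [Module K N]
  [AddCommGroup Q] [Module K Q]

lemma exists_sum_bilin_eq_of_not_linearIndependent (B : M →ₗ[K] N →ₗ[K] Q) {n : ℕ}
    {x : Fin (n + 1) → M} (y : Fin (n + 1) → N) (hx : ¬ LinearIndependent K x) :
    ∃ (x' : Fin n → M) (y' : Fin n → N), ∑ i, B (x' i) (y' i) = ∑ i, B (x i) (y i) := by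
  obtain ⟨g, hg, i, hi⟩ := Fintype.not_linearIndependent_iff.mp hx
  refine ⟨fun j => x (i.succAbove j),
    fun j => y (i.succAbove j) - ((g i)⁻¹ * g (i.succAbove j)) • y i, ?_⟩
  have hxi : x i = -∑ j, ((g i)⁻¹ * g (i.succAbove j)) • x (i.succAbove j) := by
    rw [Fin.sum_univ_succAbove _ i] at hg
    simp only [mul_smul, ← Finset.smul_sum]
    rw [← smul_neg, ← eq_neg_of_add_eq_zero_left hg, inv_smul_smul₀ hi]
  rw [Fin.sum_univ_succAbove _ i, hxi]
  simp only [map_sub, map_neg, map_sum, map_smul, Finset.sum_sub_distrib, LinearMap.neg_apply,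
    LinearMap.sum_apply, LinearMap.smul_apply]
  abel

lemma exists_linearIndependent_sum_bilin_eq (B : M →ₗ[K] N →ₗ[K] Q) {n : ℕ}
    (x : Fin n → M) (y : Fin n → N) :
    ∃ k ≤ n, ∃ (x' : Fin k → M) (y' : Fin k → N), LinearIndependent K x' ∧
      LinearIndependent K y' ∧ ∑ i, B (x' i) (y' i) = ∑ i, B (x i) (y i) := by
  induction n with
  | zero => exact ⟨0, le_rfl, x, y, linearIndependent_empty_type, linearIndependent_empty_type, rfl⟩
  | succ n ih =>
    by_cases hx : LinearIndependent K x
    · by_cases hy : LinearIndependent K y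
      · exact ⟨n + 1, le_rfl, x, y, hx, hy, rfl⟩
      · obtain ⟨y₁, x₁, h₁⟩ := exists_sum_bilin_eq_of_not_linearIndependent B.flip x hy
        obtain ⟨k, hk, x', y', hx', hy', h⟩ := ih x₁ y₁
        exact ⟨k, hk.trans n.le_succ, x', y', hx', hy', h.trans h₁⟩
    · obtain ⟨x₁, y₁, h₁⟩ := exists_sum_bilin_eq_of_not_linearIndependent B y hx
      obtain ⟨k, hk, x', y', hx', hy', h⟩ := ih x₁ y₁
      exact ⟨k, hk.trans n.le_succ, x', y', hx', hy', h.trans h₁⟩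

end Rank

section MixedWronskian

variable {σ τ R : Type*} [Fintype σ] [Fintype τ] [CommRing R] {k : ℕ}

/-- The determinant of the mixed derivatives of orders `(μ i, ν j)`. For `P = ∑ l, φ l (x) ψ l (y)`
it is the product of the generalized Wronskians of the `φ l` and of the `ψ l`. -/
noncomputable def mixedWronskian (μ : Fin k → σ →₀ ℕ) (ν : Fin k → τ →₀ ℕ)
    (P : MvPolynomial (σ ⊕ τ) R) : MvPolynomial (σ ⊕ τ) R :=
  (Matrix.of fun i j => hasseDeriv ((μ i).sumElim (ν j)) P).det

variable (μ : Fin k → σ →₀ ℕ) (ν : Fin k → τ →₀ ℕ)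

lemma map_mixedWronskian {S : Type*} [CommRing S] (f : R →+* S) (P : MvPolynomial (σ ⊕ τ) R) :
    map f (mixedWronskian μ ν P) = mixedWronskian μ ν (map f P) := by
  rw [mixedWronskian, RingHom.map_det]
  congr 1
  ext1 i j
  exact (hasseDeriv_map f _ P).symm

lemma translate_mixedWronskian [IsDomain R] [CharZero R] (a : σ ⊕ τ → R)
    (P : MvPolynomial (σ ⊕ τ) R) :
    translate a (mixedWronskian μ ν P) = mixedWronskian μ ν (translate a P) := by
  rw [mixedWronskian, AlgHom.map_det]
  congr 1
  ext1 i j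
  exact (hasseDeriv_translate a _ P).symm

lemma injective_of_mixedWronskian_ne_zero {P : MvPolynomial (σ ⊕ τ) R}
    (h : mixedWronskian μ ν P ≠ 0) : Function.Injective ν := by
  intro j j' hν
  by_contra hne
  exact h (Matrix.det_zero_of_column_eq hne fun i => by simp only [Matrix.of_apply, hν])

lemma mixedWronskian_mem_weightFiltration {w : (σ ⊕ τ →₀ ℕ) →+ ℝ} (hw : ∀ s, 0 ≤ w s) {c : ℝ}
    {P : MvPolynomial (σ ⊕ τ) R} (hP : P ∈ weightFiltration R w c) {b : Fin k → ℝ}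
    (hb : ∀ i j, w ((μ i).sumElim (ν j)) ≤ b j) :
    mixedWronskian μ ν P ∈ weightFiltration R w (∑ j, max 0 (c - b j)) := by
  refine det_mem_weightFiltration fun i j => mem_weightFiltration.mpr fun s hs => ?_
  refine max_le (hw s) ((sub_le_sub_left (hb i j) c).trans ?_)
  exact mem_weightFiltration.mp (hasseDeriv_mem_weightFiltration hP _) s hs

lemma degreeOf_mixedWronskian_le (P : MvPolynomial (σ ⊕ τ) R) (h : σ ⊕ τ) :
    degreeOf h (mixedWronskian μ ν P) ≤ k * degreeOf h P := by
  refine (degreeOf_det_le fun i j => ?_).trans_eq (congrArg (· * _) (Fintype.card_fin k))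
  exact degreeOf_hasseDeriv_le ((μ i).sumElim (ν j)) P h

lemma mixedWronskian_sum_sepMul (φ : Fin k → MvPolynomial σ R) (ψ : Fin k → MvPolynomial τ R) :
    mixedWronskian μ ν (∑ l, sepMul (φ l) (ψ l)) =
      sepMul (Matrix.of fun i l => hasseDeriv (μ i) (φ l)).det
        (Matrix.of fun j l => hasseDeriv (ν j) (ψ l)).det := by
  rw [sepMul_apply, AlgHom.map_det, AlgHom.map_det, ← Matrix.det_transpose (AlgHom.mapMatrix _
    (Matrix.of fun j l => hasseDeriv (ν j) (ψ l))), ← Matrix.det_mul]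
  rw [mixedWronskian]
  congr 1
  ext1 i j
  simp only [Matrix.of_apply, map_sum, hasseDeriv_sepMul]
  simp [Matrix.mul_apply, sepMul_apply]

lemma exists_mixedWronskian_eq_sepMul {K : Type*} [Field K] [CharZero K]
    {P : MvPolynomial (σ ⊕ Unit) K} (hP : P ≠ 0) {n : ℕ} (hdeg : degreeOf (Sum.inr ()) P ≤ n) :
    ∃ k, 0 < k ∧ k ≤ n + 1 ∧ ∃ (μ : Fin k → σ →₀ ℕ) (ν : Fin k → Unit →₀ ℕ)
      (φ : MvPolynomial σ K) (ψ : MvPolynomial Unit K),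
      (∀ i, (μ i).degree < k) ∧ (∀ j, (ν j).degree < k) ∧ φ ≠ 0 ∧ ψ ≠ 0 ∧
      mixedWronskian μ ν P = sepMul φ ψ := by
  obtain ⟨k, hk, φ, ψ, hφ, hψ, hsum⟩ := exists_linearIndependent_sum_bilin_eq sepMul
    (fun i : Fin (n + 1) => comapExponents (sumElimRight (Finsupp.single () (i : ℕ))) P)
    fun i => monomial (Finsupp.single () (i : ℕ)) 1
  obtain rfl := (eq_sum_sepMul_of_degreeOf_le hdeg).trans hsum.symm
  obtain ⟨μ, hμ, hdetμ⟩ := exists_generalizedWronskian_ne_zero hφ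
  obtain ⟨ν, hν, hdetν⟩ := exists_generalizedWronskian_ne_zero hψ
  refine ⟨k, Nat.pos_of_ne_zero ?_, hk, μ, ν, _, _, hμ, hν, hdetμ, hdetν,
    mixedWronskian_sum_sepMul μ ν φ ψ⟩
  rintro rfl
  simp at hP

-- Gauss's lemma in disguise: a row and a column of `mixedWronskian μ ν P` are integral versions of
-- the two factors over `ℚ`.
theorem exists_mixedWronskian_sepMul_comapExponents {P : MvPolynomial (σ ⊕ Unit) ℤ} (hP : P ≠ 0)
    {n : ℕ} (hdeg : degreeOf (Sum.inr ()) P ≤ n) :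
    ∃ k, 0 < k ∧ k ≤ n + 1 ∧ ∃ (μ : Fin k → σ →₀ ℕ) (ν : Fin k → Unit →₀ ℕ)
      (W : MvPolynomial (σ ⊕ Unit) ℤ) (s : σ →₀ ℕ) (t : Unit →₀ ℕ),
      (∀ i, (μ i).degree < k) ∧ (∀ j, (ν j).degree < k) ∧ mixedWronskian μ ν P = W ∧
      coeff (s.sumElim t) W ≠ 0 ∧
      sepMul (comapExponents (sumElimRight t) W) (comapExponents (sumElimLeft s) W) =
        coeff (s.sumElim t) W • W := by
  have hcast : Function.Injective (Int.castRingHom ℚ) := Int.cast_injective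
  have hPQ : map (Int.castRingHom ℚ) P ≠ 0 :=
    (map_ne_zero_iff _ (map_injective _ hcast)).mpr hP
  have hdegQ : degreeOf (Sum.inr ()) (map (Int.castRingHom ℚ) P) ≤ n := by
    classical
    rw [degreeOf_def] at hdeg ⊢
    exact (Multiset.count_le_of_le _ degrees_map_le).trans hdeg
  obtain ⟨k, hk₀, hk, μ, ν, φ, ψ, hμ, hν, hφ, hψ, hW⟩ := exists_mixedWronskian_eq_sepMul hPQ hdegQ
  rw [← map_mixedWronskian] at hW
  obtain ⟨s, hs⟩ := ne_zero_iff.mp hφ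
  obtain ⟨t, ht⟩ := ne_zero_iff.mp hψ
  refine ⟨k, hk₀, hk, μ, ν, _, s, t, hμ, hν, rfl, fun h => mul_ne_zero hs ht ?_,
    sepMul_comapExponents_of_map_eq hcast hW s t⟩
  rw [← coeff_sepMul, ← hW, coeff_map, h, map_zero]

end MixedWronskian

section Univariate

lemma uniqueAlgEquiv_translate {σ R : Type*} [Unique σ] [CommRing R] (a : σ → R)
    (P : MvPolynomial σ R) : uniqueAlgEquiv R σ (translate a P) =
      (uniqueAlgEquiv R σ P).comp (Polynomial.X + Polynomial.C (a default)) := by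
  have h : (uniqueAlgEquiv R σ).toAlgHom.comp (translate a) =
      (Polynomial.aeval (Polynomial.X + Polynomial.C (a default))).comp
        (uniqueAlgEquiv R σ).toAlgHom :=
    MvPolynomial.algHom_ext fun i => by
      obtain rfl := Subsingleton.elim default i
      simp
  exact DFunLike.congr_fun h P

lemma exists_coeff_translate_ne_zero_den_pow_le {σ : Type*} [Unique σ] {P : MvPolynomial σ ℤ}
    (hP : P ≠ 0) (x : σ → ℚ) :
    ∃ s, coeff s (translate x (map (Int.castRingHom ℚ) P)) ≠ 0 ∧
      ((x default).den : ℝ) ^ s default ≤ l1Norm P := by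
  set p := uniqueAlgEquiv ℤ σ P
  have hp : p ≠ 0 := (map_ne_zero_iff _ (uniqueAlgEquiv ℤ σ).injective).mpr hP
  have hmap : uniqueAlgEquiv ℚ σ (map (Int.castRingHom ℚ) P) = p.map (Int.castRingHom ℚ) := by
    ext n
    rw [coeff_uniqueAlgEquiv, coeff_map, Polynomial.coeff_map, coeff_uniqueAlgEquiv]
  set q := (p.map (Int.castRingHom ℚ)).comp (Polynomial.X + Polynomial.C (x default))
  have hq : q ≠ 0 := Polynomial.comp_X_add_C_ne_zero_iff.mpr
    ((Polynomial.map_ne_zero_iff Int.cast_injective).mpr hp)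
  refine ⟨Finsupp.single default q.natTrailingDegree, ?_, ?_⟩
  · rw [← coeff_uniqueAlgEquiv, uniqueAlgEquiv_translate, hmap]
    exact Polynomial.trailingCoeff_nonzero_iff_nonzero.mpr hq
  · have hle := Int.le_of_dvd (abs_pos.mpr (Polynomial.leadingCoeff_ne_zero.mpr hp))
      ((dvd_abs _ _).mpr (den_pow_rootMultiplicity_dvd_leadingCoeff p (x default)))
    rw [Polynomial.rootMultiplicity_eq_natTrailingDegree] at hle
    rw [Finsupp.single_eq_same]
    calc ((x default).den : ℝ) ^ q.natTrailingDegree ≤ |(p.leadingCoeff : ℝ)| := by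
          exact_mod_cast hle
      _ = ‖coeff (Finsupp.single default p.natDegree) P‖ := by
          rw [← coeff_uniqueAlgEquiv, Int.norm_eq_abs]; rfl
      _ ≤ l1Norm P := norm_coeff_le_l1Norm _ _

end Univariate

/-! ### Roth's lemma -/

section MixedWronskianBounds

variable {σ τ : Type*} [Fintype σ] [Fintype τ]

lemma l1Norm_mixedWronskian_le_exp {k : ℕ} (μ : Fin k → σ →₀ ℕ) (ν : Fin k → τ →₀ ℕ)
    {P : MvPolynomial (σ ⊕ τ) ℤ} {r : σ ⊕ τ → ℕ} {A : ℝ} (hdeg : ∀ h, degreeOf h P ≤ r h)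
    (hr : ∀ h, (r h : ℝ) ≤ A) (hP : l1Norm P ≤ Real.exp A) (hk : (k : ℝ) ≤ A + 1) :
    l1Norm (mixedWronskian μ ν P) ≤ Real.exp (k * ((Fintype.card (σ ⊕ τ) + 2) * A)) := by
  have htwo : (2 : ℝ) ^ (∑ h, r h) ≤ Real.exp (Fintype.card (σ ⊕ τ) * A) :=
    calc (2 : ℝ) ^ (∑ h, r h) ≤ Real.exp 1 ^ (∑ h, r h) := by
          gcongr
          linarith [Real.add_one_le_exp (1 : ℝ)]
      _ = Real.exp (∑ h, (r h : ℝ)) := by rw [← Real.exp_nat_mul, mul_one, Nat.cast_sum]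
      _ ≤ Real.exp (Fintype.card (σ ⊕ τ) * A) := by
          refine Real.exp_le_exp.mpr ((Finset.sum_le_card_nsmul _ _ A fun h _ => hr h).trans_eq ?_)
          rw [Finset.card_univ, nsmul_eq_mul]
  have hfactorial : (k.factorial : ℝ) ≤ Real.exp A ^ k :=
    calc (k.factorial : ℝ) ≤ (k : ℝ) ^ k := by exact_mod_cast k.factorial_le_pow
      _ ≤ Real.exp A ^ k := by
          gcongr
          exact hk.trans (Real.add_one_le_exp A)
  have hderiv (i j) : l1Norm (hasseDeriv ((μ i).sumElim (ν j)) P) ≤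
      Real.exp (Fintype.card (σ ⊕ τ) * A) * Real.exp A :=
    (l1Norm_hasseDeriv_le hdeg _).trans (mul_le_mul htwo hP (l1Norm_nonneg P) (Real.exp_nonneg _))
  refine (l1Norm_det_le hderiv).trans ?_
  rw [Fintype.card_fin]
  refine (mul_le_mul_of_nonneg_right hfactorial (by positivity)).trans_eq ?_
  rw [← mul_pow, ← Real.exp_add, ← Real.exp_add, ← Real.exp_nat_mul]
  ring_nf

lemma sum_univ_eq_sum_range_of_injective {M : Type*} [AddCommMonoid M] {k : ℕ} {n : Fin k → ℕ}
    (hn : Function.Injective n) (hlt : ∀ i, n i < k) (f : ℕ → M) :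
    ∑ i, f (n i) = ∑ i ∈ Finset.range k, f i := by
  have himage : Finset.univ.image n = Finset.range k :=
    Finset.eq_of_subset_of_card_le
      (Finset.image_subset_iff.mpr fun i _ => Finset.mem_range.mpr (hlt i))
      (by rw [Finset.card_image_of_injective _ hn, Finset.card_range, Finset.card_fin])
  rw [← himage, Finset.sum_image fun i _ j _ h => hn h]

lemma mul_sq_div_le_sum_max_sub {k ρ : ℕ} (hk : k ≤ ρ + 1) (hρ : 0 < ρ) {ε : ℝ} (hε : 0 < ε)
    (hε₁ : ε ≤ 1) : k * ε ^ 2 / 32 ≤ ∑ n ∈ Finset.range k, max 0 (ε / 2 - (n : ℝ) / ρ) := by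
  have hρ' : (0 : ℝ) < ρ := by exact_mod_cast hρ
  have hk₂ : (k : ℝ) ≤ 2 * ρ := by
    have : k ≤ 2 * ρ := by omega
    exact_mod_cast this
  set t := min k (⌊ρ * ε / 4⌋₊ + 1) with ht
  have hcount : k * ε / 8 ≤ t := by
    rw [ht, Nat.cast_min]
    refine le_min (by nlinarith [k.cast_nonneg (α := ℝ)]) ?_
    push_cast
    nlinarith [Nat.lt_floor_add_one (ρ * ε / 4)]
  have hterm : ∀ n ∈ Finset.range t, ε / 4 ≤ max 0 (ε / 2 - (n : ℝ) / ρ) := by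
    intro n hn
    have hle : n ≤ ⌊ρ * ε / 4⌋₊ :=
      Nat.lt_succ_iff.mp ((Finset.mem_range.mp hn).trans_le (min_le_right _ _))
    have hdiv : (n : ℝ) / ρ ≤ ε / 4 := by
      rw [div_le_iff₀ hρ']
      linarith [(Nat.le_floor_iff (by positivity)).mp hle]
    exact le_max_of_le_right (by linarith)
  calc k * ε ^ 2 / 32 ≤ t * (ε / 4) := by nlinarith
    _ ≤ ∑ n ∈ Finset.range t, max 0 (ε / 2 - (n : ℝ) / ρ) := by
        simpa using Finset.card_nsmul_le_sum _ _ _ hterm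
    _ ≤ ∑ n ∈ Finset.range k, max 0 (ε / 2 - (n : ℝ) / ρ) :=
        Finset.sum_le_sum_of_subset_of_nonneg (Finset.range_subset_range.mpr (min_le_left _ _))
          fun _ _ _ => le_max_left _ _

end MixedWronskianBounds

section RothDatum

variable {σ : Type*}

/-- The regime in which Roth's lemma operates: degrees `r` attached to rational points `x` with
`exp H ≤ den (x h) ^ r h`, where the degrees decrease rapidly along the relation `lt`. The parameter
`ω` measures the smallness in all these conditions. -/
structure IsRothDegrees (lt : σ → σ → Prop) (ω : ℝ) (r : σ → ℕ) (x : σ → ℚ) (H : ℝ) : Prop where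
  pos : ∀ h, 0 < r h
  le_mul_log_den : ∀ h, H ≤ r h * Real.log (x h).den
  le_mul : ∀ h, (r h : ℝ) ≤ ω * H
  decay : ∀ i j, lt i j → (r j : ℝ) ≤ ω * r i

/-- The hypotheses of Roth's lemma: an integral polynomial `P` of multidegree at most `r` and
height at most `exp (ω * H)`, for degrees `r` and rational points `x` as in `IsRothDegrees`. -/
structure IsRothDatum (lt : σ → σ → Prop) (ω : ℝ) (r : σ → ℕ) (x : σ → ℚ) (H : ℝ)
    (P : MvPolynomial σ ℤ) : Prop extends IsRothDegrees lt ω r x H where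
  ne_zero : P ≠ 0
  degreeOf_le : ∀ h, degreeOf h P ≤ r h
  l1Norm_le : l1Norm P ≤ Real.exp (ω * H)

/-- The conclusion of Roth's lemma for variables `σ` whose degrees decrease along `lt`: for every
`ε`, the index of `P` at `x` is at most `ε` once the data are sufficiently small. -/
def RothProperty (lt : σ → σ → Prop) : Prop :=
  ∀ ε > 0, ∃ ω > 0, ∀ r x H P, IsRothDatum lt ω r x H P →
    ∃ s, coeff s (translate x (map (Int.castRingHom ℚ) P)) ≠ 0 ∧ indexWeight r s ≤ ε

lemma translate_map_intCast_ne_zero {P : MvPolynomial σ ℤ} (hP : P ≠ 0) (x : σ → ℚ) :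
    translate x (map (Int.castRingHom ℚ) P) ≠ 0 :=
  (map_ne_zero_iff _ (translate_injective x)).mpr
    ((map_ne_zero_iff _ (map_injective _ Int.cast_injective)).mpr hP)

lemma rothProperty_of_isEmpty [IsEmpty σ] (lt : σ → σ → Prop) : RothProperty lt := by
  refine fun ε hε => ⟨1, one_pos, fun r x H P hd => ?_⟩
  obtain ⟨s, hs⟩ := ne_zero_iff.mp (translate_map_intCast_ne_zero hd.ne_zero x)
  exact ⟨s, hs, by simpa [Subsingleton.elim s 0] using hε.le⟩

lemma IsRothDatum.pos_of_nonempty [Nonempty σ] {lt : σ → σ → Prop} {ω H : ℝ} {r : σ → ℕ}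
    {x : σ → ℚ} {P : MvPolynomial σ ℤ} (hd : IsRothDatum lt ω r x H P) (hω : 0 < ω) : 0 < H := by
  inhabit σ
  have hr : (0 : ℝ) < r default := by exact_mod_cast hd.pos default
  exact pos_of_mul_pos_right (hr.trans_le (hd.le_mul default)) hω.le

lemma IsRothDatum.of_inl {lt : σ → σ → Prop} {ω ω' H : ℝ} {r : σ ⊕ Unit → ℕ}
    {x : σ ⊕ Unit → ℚ} {P : MvPolynomial (σ ⊕ Unit) ℤ}
    (hd : IsRothDatum (Sum.Lex lt emptyRelation) ω r x H P) (hH : 0 ≤ H) (hω : ω ≤ ω') {k : ℕ}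
    (hk : 0 < k) {V : MvPolynomial σ ℤ} (hV : V ≠ 0) (hdeg : ∀ h, degreeOf h V ≤ k * r (Sum.inl h))
    (hl : l1Norm V ≤ Real.exp (k * (ω' * H))) :
    IsRothDatum lt ω' (fun h => k * r (Sum.inl h)) (x ∘ Sum.inl) (k * H) V where
  ne_zero := hV
  pos h := Nat.mul_pos hk (hd.pos _)
  le_mul_log_den h := by
    rw [Nat.cast_mul, mul_assoc]
    exact mul_le_mul_of_nonneg_left (hd.le_mul_log_den _) k.cast_nonneg
  le_mul h := by
    rw [Nat.cast_mul, mul_left_comm]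
    gcongr
    exact (hd.le_mul _).trans (by gcongr)
  decay i j hij := by
    rw [Nat.cast_mul, Nat.cast_mul, mul_left_comm]
    gcongr
    exact (hd.decay _ _ (Sum.Lex.inl hij)).trans (by gcongr)
  degreeOf_le := hdeg
  l1Norm_le := hl.trans_eq (by rw [mul_left_comm])

lemma exists_coeff_translate_ne_zero_indexWeight_le [Unique σ] {U : MvPolynomial σ ℤ} (hU : U ≠ 0)
    {x : σ → ℚ} {r : σ → ℕ} {c H : ℝ} (hc : 0 ≤ c) (hr : 0 < r default) (hH : 0 < H)
    (hx : H ≤ r default * Real.log (x default).den) (hl : l1Norm U ≤ Real.exp (c * H)) :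
    ∃ t, coeff t (translate x (map (Int.castRingHom ℚ) U)) ≠ 0 ∧ indexWeight r t ≤ c := by
  obtain ⟨t, ht, hden⟩ := exists_coeff_translate_ne_zero_den_pow_le hU x
  refine ⟨t, ht, ?_⟩
  have hr' : (0 : ℝ) < r default := by exact_mod_cast hr
  have hlog : 0 < Real.log (x default).den := pos_of_mul_pos_right (hH.trans_le hx) hr'.le
  have hden₀ : (0 : ℝ) < (x default).den := by exact_mod_cast (x default).den_pos
  rw [indexWeight_eq_sum, Fintype.sum_unique, div_le_iff₀ hr']
  refine le_of_mul_le_mul_right ?_ hlog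
  calc t default * Real.log (x default).den = Real.log ((x default).den ^ t default) :=
        (Real.log_pow _ _).symm
    _ ≤ c * H := (Real.log_le_iff_le_exp (pow_pos hden₀ _)).mpr (hden.trans hl)
    _ ≤ c * r default * Real.log (x default).den := by
        rw [mul_assoc]
        exact mul_le_mul_of_nonneg_left hx hc

lemma IsRothDatum.indexWeight_sumElim_le {lt : σ → σ → Prop} {ω H : ℝ} {r : σ ⊕ Unit → ℕ}
    {x : σ ⊕ Unit → ℚ} {P : MvPolynomial (σ ⊕ Unit) ℤ}
    (hd : IsRothDatum (Sum.Lex lt emptyRelation) ω r x H P) (hω : 0 ≤ ω) {s : σ →₀ ℕ}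
    (hs : s.degree ≤ r (Sum.inr ())) (t : Unit →₀ ℕ) :
    indexWeight r (s.sumElim t) ≤ ω + t () / r (Sum.inr ()) := by
  have hρ : (0 : ℝ) < r (Sum.inr ()) := by exact_mod_cast hd.pos _
  have hinv (h : σ) : (r (Sum.inl h) : ℝ)⁻¹ ≤ ω / r (Sum.inr ()) := by
    have hr : (0 : ℝ) < r (Sum.inl h) := by exact_mod_cast hd.pos _
    rw [inv_eq_one_div, div_le_div_iff₀ hr hρ, one_mul]
    exact hd.decay _ _ (Sum.Lex.sep h ())
  rw [indexWeight_sumElim]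
  refine add_le_add ?_ (by simp [indexWeight_eq_sum])
  calc indexWeight (r ∘ Sum.inl) s ≤ s.degree * (ω / r (Sum.inr ())) :=
        indexWeight_le_degree_mul hinv s
    _ ≤ r (Sum.inr ()) * (ω / r (Sum.inr ())) := by gcongr
    _ = ω := mul_div_cancel₀ ω hρ.ne'

lemma coeff_translate_map_ne_zero_of_sepMul_eq {τ : Type*} {V : MvPolynomial σ ℤ}
    {U : MvPolynomial τ ℤ} {W : MvPolynomial (σ ⊕ τ) ℤ} {c : ℤ} (h : sepMul V U = c • W)
    {x : σ ⊕ τ → ℚ} {s : σ →₀ ℕ} {t : τ →₀ ℕ}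
    (hs : coeff s (translate (x ∘ Sum.inl) (map (Int.castRingHom ℚ) V)) ≠ 0)
    (ht : coeff t (translate (x ∘ Sum.inr) (map (Int.castRingHom ℚ) U)) ≠ 0) :
    coeff (s.sumElim t) (translate x (map (Int.castRingHom ℚ) W)) ≠ 0 := by
  have hmap := congrArg (fun Q => translate x (map (Int.castRingHom ℚ) Q)) h
  simp only [← sepMul_map, translate_sepMul, smul_eq_C_mul, map_mul, map_C, translate_C] at hmap
  have hcoeff := congrArg (coeff (s.sumElim t)) hmap
  rw [coeff_sepMul, coeff_C_mul] at hcoeff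
  exact right_ne_zero_of_mul (hcoeff ▸ mul_ne_zero hs ht)

variable [Fintype σ]

lemma IsRothDatum.mixedWronskian_mem_weightFiltration {lt : σ → σ → Prop} {ω H ε : ℝ}
    {r : σ ⊕ Unit → ℕ} {x : σ ⊕ Unit → ℚ} {P : MvPolynomial (σ ⊕ Unit) ℤ}
    (hd : IsRothDatum (Sum.Lex lt emptyRelation) ω r x H P) (hω : 0 ≤ ω) (hωε : ω ≤ ε / 2)
    (hε : 0 < ε) (hε₁ : ε ≤ 1) {k : ℕ} (hk : k ≤ r (Sum.inr ()) + 1) {μ : Fin k → σ →₀ ℕ}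
    {ν : Fin k → Unit →₀ ℕ} (hμ : ∀ i, (μ i).degree < k) (hν : ∀ j, (ν j).degree < k)
    (hinj : Function.Injective ν) {Q : MvPolynomial (σ ⊕ Unit) ℚ}
    (hQ : Q ∈ weightFiltration ℚ (indexWeight r) ε) :
    mixedWronskian μ ν Q ∈ weightFiltration ℚ (indexWeight r) (k * ε ^ 2 / 32) := by
  have hweight (i j) : indexWeight r ((μ i).sumElim (ν j)) ≤ ε / 2 + ν j () / r (Sum.inr ()) :=
    (hd.indexWeight_sumElim_le hω (by have := hμ i; omega) (ν j)).trans (by gcongr)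
  have hmem := Roth.mixedWronskian_mem_weightFiltration μ ν (indexWeight_nonneg r) hQ hweight
  have hνinj : Function.Injective fun j => ν j () := fun i j h => hinj (by ext; exact h)
  have hνlt (j) : ν j () < k := by simpa [Finsupp.degree_eq_sum] using hν j
  simp only [← sub_sub, sub_half] at hmem
  rw [sum_univ_eq_sum_range_of_injective hνinj hνlt
    fun n => max 0 (ε / 2 - (n : ℝ) / r (Sum.inr ()))] at hmem
  refine mem_weightFiltration.mpr fun s hs => ?_
  exact (mul_sq_div_le_sum_max_sub hk (hd.pos _) hε hε₁).trans (mem_weightFiltration.mp hmem s hs)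

lemma IsRothDatum.exists_mixedWronskian_index_le {lt : σ → σ → Prop} {ω ω' δ H : ℝ}
    {r : σ ⊕ Unit → ℕ} {x : σ ⊕ Unit → ℚ} {P : MvPolynomial (σ ⊕ Unit) ℤ}
    (hd : IsRothDatum (Sum.Lex lt emptyRelation) ω r x H P) (hω : 0 < ω)
    (hωω' : (Fintype.card (σ ⊕ Unit) + 2) * ω ≤ ω') (hωδ : (Fintype.card (σ ⊕ Unit) + 2) * ω ≤ δ)
    (hind : ∀ r x H V, IsRothDatum lt ω' r x H V →
      ∃ s, coeff s (translate x (map (Int.castRingHom ℚ) V)) ≠ 0 ∧ indexWeight r s ≤ δ) :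
    ∃ k, 0 < k ∧ k ≤ r (Sum.inr ()) + 1 ∧ ∃ (μ : Fin k → σ →₀ ℕ) (ν : Fin k → Unit →₀ ℕ),
      (∀ i, (μ i).degree < k) ∧ (∀ j, (ν j).degree < k) ∧ Function.Injective ν ∧
      ∃ u, coeff u (translate x (map (Int.castRingHom ℚ) (mixedWronskian μ ν P))) ≠ 0 ∧
        indexWeight r u ≤ 2 * (k * δ) := by
  have hH := hd.pos_of_nonempty hω
  obtain ⟨k, hk, hkr, μ, ν, W, s₀, t₀, hμ, hν, hW, hst, hVU⟩ :=
    exists_mixedWronskian_sepMul_comapExponents hd.ne_zero (hd.degreeOf_le (Sum.inr ()))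
  have hδ : 0 ≤ δ := le_trans (by positivity) hωδ
  have hWl {η : ℝ} (hη : (Fintype.card (σ ⊕ Unit) + 2) * ω ≤ η) :
      l1Norm W ≤ Real.exp (k * (η * H)) := by
    have hk' : (k : ℝ) ≤ r (Sum.inr ()) + 1 := by exact_mod_cast hkr
    rw [← hW]
    refine (l1Norm_mixedWronskian_le_exp μ ν hd.degreeOf_le hd.le_mul hd.l1Norm_le
      (hk'.trans (by gcongr; exact hd.le_mul _))).trans (Real.exp_le_exp.mpr ?_)
    rw [← mul_assoc (_ + _)]
    gcongr
  have hdeg (h : σ) : degreeOf h (comapExponents (sumElimRight t₀) W) ≤ k * r (Sum.inl h) := by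
    refine (degreeOf_comapExponents_le _ W (j := Sum.inl h) fun s => le_rfl).trans ?_
    rw [← hW]
    exact (degreeOf_mixedWronskian_le μ ν P _).trans (Nat.mul_le_mul_left k (hd.degreeOf_le _))
  obtain ⟨s, hs, hsδ⟩ := hind _ _ _ _ (hd.of_inl hH.le (by nlinarith) hk
    (ne_zero_iff.mpr ⟨s₀, by rwa [coeff_comapExponents]⟩) hdeg
    ((l1Norm_comapExponents_le _ W).trans (hWl hωω')))
  obtain ⟨t, ht, htδ⟩ := exists_coeff_translate_ne_zero_indexWeight_le
    (U := comapExponents (sumElimLeft s₀) W) (x := x ∘ Sum.inr) (r := r ∘ Sum.inr) (c := k * δ)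
    (ne_zero_iff.mpr ⟨t₀, by rwa [coeff_comapExponents]⟩)
    (mul_nonneg k.cast_nonneg hδ) (hd.pos _) hH (hd.le_mul_log_den _)
    ((l1Norm_comapExponents_le _ W).trans ((hWl hωδ).trans_eq (by rw [mul_assoc])))
  have hk₀ : (0 : ℝ) < k := by exact_mod_cast hk
  rw [indexWeight_natMul, div_le_iff₀' hk₀] at hsδ
  refine ⟨k, hk, hkr, μ, ν, hμ, hν, injective_of_mixedWronskian_ne_zero μ ν (P := P) ?_,
    s.sumElim t, hW ▸ coeff_translate_map_ne_zero_of_sepMul_eq hVU hs ht, ?_⟩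
  · exact hW ▸ ne_zero_iff.mpr ⟨_, hst⟩
  · rw [indexWeight_sumElim, two_mul]
    exact add_le_add hsδ htδ

end RothDatum

section RothLemma

variable {σ : Type*}

lemma RothProperty.sum_unit [Finite σ] {lt : σ → σ → Prop} (hlt : RothProperty lt) :
    RothProperty (Sum.Lex lt (emptyRelation : Unit → Unit → Prop)) := by
  have := Fintype.ofFinite σ
  intro ε₀ hε₀
  set ε := min ε₀ 1
  have hε : 0 < ε := lt_min hε₀ one_pos
  have hε₁ : ε ≤ 1 := min_le_right _ _
  obtain ⟨ω', hω', hind⟩ := hlt (ε ^ 2 / 100) (by positivity)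
  have hη : 0 < min ω' (ε ^ 2 / 100) := lt_min hω' (by positivity)
  set C : ℝ := Fintype.card (σ ⊕ Unit) + 2
  have hC : 2 ≤ C := le_add_of_nonneg_left (Nat.cast_nonneg _)
  set ω := min ω' (ε ^ 2 / 100) / C
  have hCω : C * ω = min ω' (ε ^ 2 / 100) := mul_div_cancel₀ _ (by positivity)
  have hω : 0 < ω := by positivity
  have hωδ : C * ω ≤ ε ^ 2 / 100 := hCω.trans_le (min_le_right _ _)
  refine ⟨ω, hω, fun r x H P hd => ?_⟩
  obtain ⟨k, hk, hkr, μ, ν, hμ, hν, hinj, u, hu, hle⟩ := hd.exists_mixedWronskian_index_le hω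
    (hCω.trans_le (min_le_left _ _)) hωδ hind
  by_contra! hindex
  have hP : translate x (map (Int.castRingHom ℚ) P) ∈ weightFiltration ℚ (indexWeight r) ε :=
    mem_weightFiltration.mpr fun s hs => (min_le_left _ _).trans (hindex s hs).le
  have hW := hd.mixedWronskian_mem_weightFiltration hω.le (by nlinarith) hε hε₁ hkr hμ hν hinj hP
  rw [← translate_mixedWronskian, ← map_mixedWronskian] at hW
  have hlower := mem_weightFiltration.mp hW u hu
  have hpos : 0 < k * ε ^ 2 := by positivity
  linarith

lemma RothProperty.of_equiv {τ : Type*} {lt : σ → σ → Prop} {lt' : τ → τ → Prop}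
    (hlt : RothProperty lt) (e : σ ≃ τ) (he : ∀ i j, lt i j → lt' (e i) (e j)) :
    RothProperty lt' := by
  intro ε hε
  obtain ⟨ω, hω, hind⟩ := hlt ε hε
  refine ⟨ω, hω, fun r x H P hd => ?_⟩
  obtain ⟨s, hs, hle⟩ := hind (r ∘ e) (x ∘ e) H (rename e.symm P)
    { ne_zero := (map_ne_zero_iff _ (rename_injective _ e.symm.injective)).mpr hd.ne_zero
      pos := fun h => hd.pos _
      le_mul_log_den := fun h => hd.le_mul_log_den _
      le_mul := fun h => hd.le_mul _
      decay := fun i j hij => hd.decay _ _ (he i j hij)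
      degreeOf_le := fun h => by
        rw [← e.symm_apply_apply h, degreeOf_rename_of_injective e.symm.injective]
        simpa using hd.degreeOf_le (e h)
      l1Norm_le := (l1Norm_rename_le _ P).trans hd.l1Norm_le }
  refine ⟨s.mapDomain e, ?_, (indexWeight_mapDomain e r s).trans_le hle⟩
  have hcomp : (x ∘ e) ∘ e.symm = x := by ext; simp
  have hs' : (s.mapDomain e).mapDomain e.symm = s := by simp [← Finsupp.mapDomain_comp]
  rw [map_rename, translate_rename, hcomp] at hs
  rwa [← coeff_rename_mapDomain _ e.symm.injective, hs']

theorem roth_lemma (m : ℕ) : RothProperty ((· < ·) : Fin m → Fin m → Prop) := by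
  induction m with
  | zero => exact rothProperty_of_isEmpty _
  | succ m ih =>
    refine ih.sum_unit.of_equiv (finSuccEquivLast.trans (Equiv.optionEquivSumPUnit _)).symm ?_
    rintro _ _ (h | h | h)
    · simpa using h
    · exact h.elim
    · simp

end RothLemma

/-! ### The auxiliary polynomial -/

section ExponentBox

variable {σ : Type*} [Fintype σ] [DecidableEq σ]

/-- The exponents of the monomials whose degree in the `h`-th variable is at most `r h`. -/
noncomputable def exponentBox (r : σ → ℕ) : Finset (σ →₀ ℕ) :=
  (Fintype.piFinset fun h => Finset.range (r h + 1)).map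
    Finsupp.equivFunOnFinite.symm.toEmbedding

@[simp] lemma mem_exponentBox {r : σ → ℕ} {s : σ →₀ ℕ} : s ∈ exponentBox r ↔ ∀ h, s h ≤ r h := by
  simp [exponentBox, Finset.mem_map_equiv]

lemma sum_exponentBox_prod {R : Type*} [CommSemiring R] (r : σ → ℕ) (f : σ → ℕ → R) :
    ∑ s ∈ exponentBox r, ∏ h, f h (s h) = ∏ h, ∑ i ∈ Finset.range (r h + 1), f h i := by
  rw [exponentBox, Finset.sum_map, Finset.prod_univ_sum]
  rfl

lemma card_exponentBox (r : σ → ℕ) : (exponentBox r).card = ∏ h, (r h + 1) := by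
  simp [exponentBox]

lemma card_exponentBox_le (r : σ → ℕ) : (exponentBox r).card ≤ 2 ^ ∑ h, r h := by
  rw [card_exponentBox, ← Finset.prod_pow_eq_pow_sum]
  exact Finset.prod_le_prod' fun h _ => Nat.lt_two_pow_self

lemma sum_range_exp_neg_mul_le {r : ℕ} (hr : 0 < r) (t : ℝ) :
    ∑ i ∈ Finset.range (r + 1), Real.exp (-t * ((i : ℝ) / r - 1 / 2)) ≤
      (r + 1) * Real.exp (t ^ 2 / 8) := by
  have hr' : (0 : ℝ) < r := by exact_mod_cast hr
  have hreflect : ∑ i ∈ Finset.range (r + 1), Real.exp (-t * ((i : ℝ) / r - 1 / 2)) =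
      ∑ i ∈ Finset.range (r + 1), Real.exp (t * ((i : ℝ) / r - 1 / 2)) := by
    rw [← Finset.sum_range_reflect]
    refine Finset.sum_congr rfl fun i hi => ?_
    rw [Nat.add_sub_cancel, Nat.cast_sub (Nat.lt_succ_iff.mp (Finset.mem_range.mp hi))]
    congr 1
    field_simp
    ring
  have hcosh : ∀ i ∈ Finset.range (r + 1),
      Real.cosh (t * ((i : ℝ) / r - 1 / 2)) ≤ Real.exp (t ^ 2 / 8) := by
    intro i hi
    have hi₁ : (i : ℝ) / r ≤ 1 := by
      rw [div_le_one hr']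
      exact_mod_cast Nat.lt_succ_iff.mp (Finset.mem_range.mp hi)
    have hi₀ : (0 : ℝ) ≤ i / r := by positivity
    refine (Real.cosh_le_exp_half_sq _).trans (Real.exp_le_exp.mpr ?_)
    rw [mul_pow]
    nlinarith [mul_nonneg (sq_nonneg t) (mul_nonneg hi₀ (sub_nonneg.mpr hi₁))]
  calc ∑ i ∈ Finset.range (r + 1), Real.exp (-t * ((i : ℝ) / r - 1 / 2))
      = ∑ i ∈ Finset.range (r + 1), Real.cosh (t * ((i : ℝ) / r - 1 / 2)) := by
        simp only [Real.cosh_eq, ← Finset.sum_div, Finset.sum_add_distrib, ← neg_mul, ← hreflect]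
        ring
    _ ≤ (r + 1) * Real.exp (t ^ 2 / 8) := by
        refine (Finset.sum_le_card_nsmul _ _ _ hcosh).trans_eq ?_
        rw [Finset.card_range, nsmul_eq_mul, Nat.cast_succ]

-- Chernoff's bound: the weights `s h / r h` are independent, with mean `1 / 2`, for a uniformly
-- random `s`; the exponential moment is taken at the optimal parameter `4 * ε`.
lemma card_indexWeight_lt_le {r : σ → ℕ} (hr : ∀ h, 0 < r h) {ε : ℝ} (hε : 0 < ε) :
    (((exponentBox r).filter fun s => indexWeight r s < (1 / 2 - ε) * Fintype.card σ).card : ℝ) ≤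
      (exponentBox r).card * Real.exp (-2 * ε ^ 2 * Fintype.card σ) := by
  set m := (Fintype.card σ : ℝ) with hm
  set low := (exponentBox r).filter fun s => indexWeight r s < (1 / 2 - ε) * m
  have hmarkov : low.card * Real.exp (4 * ε * (ε * m)) ≤
      ∑ s ∈ exponentBox r, ∏ h, Real.exp (-(4 * ε) * ((s h : ℝ) / r h - 1 / 2)) := by
    rw [← nsmul_eq_mul]
    refine (Finset.card_nsmul_le_sum low _ _ fun s hs => ?_).trans
      (Finset.sum_le_sum_of_subset_of_nonneg (Finset.filter_subset _ _) fun s _ _ =>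
        Finset.prod_nonneg fun _ _ => (Real.exp_pos _).le)
    have hs := (Finset.mem_filter.mp hs).2
    rw [← Real.exp_sum, Real.exp_le_exp, ← Finset.mul_sum, Finset.sum_sub_distrib,
      ← indexWeight_eq_sum, Finset.sum_const, Finset.card_univ, nsmul_eq_mul, ← hm]
    nlinarith
  have hmoment : ∑ s ∈ exponentBox r, ∏ h, Real.exp (-(4 * ε) * ((s h : ℝ) / r h - 1 / 2)) ≤
      (exponentBox r).card * Real.exp (2 * ε ^ 2 * m) :=
    calc _ = ∏ h, ∑ i ∈ Finset.range (r h + 1),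
          Real.exp (-(4 * ε) * ((i : ℝ) / r h - 1 / 2)) :=
        sum_exponentBox_prod r fun h i => Real.exp (-(4 * ε) * ((i : ℝ) / r h - 1 / 2))
      _ ≤ ∏ h, ((r h + 1 : ℝ) * Real.exp ((4 * ε) ^ 2 / 8)) :=
        Finset.prod_le_prod (fun h _ => Finset.sum_nonneg fun _ _ => (Real.exp_pos _).le)
          fun h _ => sum_range_exp_neg_mul_le (hr h) _
      _ = (exponentBox r).card * Real.exp (2 * ε ^ 2 * m) := by
        rw [Finset.prod_mul_distrib, Finset.prod_const, Finset.card_univ, ← Real.exp_nat_mul,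
          card_exponentBox, ← hm]
        push_cast
        ring_nf
  have hcard := hmarkov.trans hmoment
  rw [← le_div_iff₀ (Real.exp_pos _), mul_div_assoc, ← Real.exp_sub] at hcard
  exact hcard.trans_eq (by ring_nf)

lemma two_mul_card_indexWeight_lt_mul_le {r : σ → ℕ} (hr : ∀ h, 0 < r h) {ε : ℝ} (hε : 0 < ε)
    {d : ℕ} (hdε : d * Real.exp (-2 * ε ^ 2 * Fintype.card σ) ≤ 1 / 2) :
    2 * (((exponentBox r).filter fun s =>
      indexWeight r s < (1 / 2 - ε) * Fintype.card σ).card * d) ≤ (exponentBox r).card := by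
  have hlow := mul_le_mul_of_nonneg_right (card_indexWeight_lt_le hr hε) d.cast_nonneg
  have hbox := mul_le_mul_of_nonneg_left hdε (exponentBox r).card.cast_nonneg
  rw [← Nat.cast_le (α := ℝ)]
  push_cast
  linarith

end ExponentBox

section AuxiliaryPolynomial

variable {σ : Type*}

attribute [local instance] Matrix.seminormedAddCommGroup in
lemma exists_ne_zero_mulVec_eq_zero_abs_le {α β : Type*} [Fintype α] [Fintype β] [Nonempty α]
    (A : Matrix α β ℤ) (hcard : 2 * Fintype.card α ≤ Fintype.card β) {M : ℝ} (hM₁ : 1 ≤ M)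
    (hM : ∀ i j, |(A i j : ℝ)| ≤ M) :
    ∃ t : β → ℤ, t ≠ 0 ∧ A.mulVec t = 0 ∧ ∀ j, |(t j : ℝ)| ≤ Fintype.card β * M := by
  have hα : 0 < Fintype.card α := Fintype.card_pos
  obtain ⟨t, ht, hAt, hbound⟩ := Int.Matrix.exists_ne_zero_int_vec_norm_le A (by omega) hα
  refine ⟨t, ht, hAt, fun j => ?_⟩
  have hA : max 1 ‖A‖ ≤ M :=
    max_le hM₁ ((Matrix.norm_le_iff (by linarith)).mpr fun i j =>
      (Int.norm_eq_abs _).trans_le (hM i j))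
  have hβ : (1 : ℝ) ≤ Fintype.card β := by exact_mod_cast (by omega : 1 ≤ Fintype.card β)
  have hcard' : 2 * (Fintype.card α : ℝ) ≤ Fintype.card β := by exact_mod_cast hcard
  have hexponent : (Fintype.card α : ℝ) / (Fintype.card β - Fintype.card α) ≤ 1 := by
    have : (0 : ℝ) < Fintype.card α := by exact_mod_cast hα
    rw [div_le_one (by linarith)]
    linarith
  calc |(t j : ℝ)| ≤ ‖t‖ := (Int.norm_eq_abs _).symm.trans_le (norm_le_pi_norm t j)
    _ ≤ _ := hbound
    _ ≤ (Fintype.card β * max 1 ‖A‖) ^ (1 : ℝ) :=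
      Real.rpow_le_rpow_of_exponent_le
        (one_le_mul_of_one_le_of_one_le hβ (le_max_left _ _)) hexponent
    _ ≤ Fintype.card β * M := by
      rw [Real.rpow_one]
      gcongr

lemma exists_ne_zero_sum_mul_coeff_eq_zero {α : Type*} [Fintype α] [Nonempty α]
    (S : Finset (σ →₀ ℕ)) (A : α → (σ →₀ ℕ) → ℤ) (hcard : 2 * Fintype.card α ≤ S.card) {M : ℝ}
    (hM₁ : 1 ≤ M) (hM : ∀ i, ∀ s ∈ S, |(A i s : ℝ)| ≤ M) :
    ∃ P : MvPolynomial σ ℤ, P ≠ 0 ∧ P.support ⊆ S ∧ (∀ i, ∑ s ∈ S, A i s * coeff s P = 0) ∧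
      ∀ s, |((coeff s P : ℤ) : ℝ)| ≤ S.card * M := by
  classical
  obtain ⟨t, ht, hAt, hbound⟩ := exists_ne_zero_mulVec_eq_zero_abs_le
    (Matrix.of fun i (s : S) => A i s) (by rwa [Fintype.card_coe]) hM₁ fun i s => hM i s s.2
  rw [Fintype.card_coe] at hbound
  set P : MvPolynomial σ ℤ := ∑ s : S, monomial (s : σ →₀ ℕ) (t s) with hP
  have hcoeff (s : S) : coeff (s : σ →₀ ℕ) P = t s := by
    simp [hP, coeff_sum, coeff_monomial]
  have hcoeff_out (s : σ →₀ ℕ) (hs : s ∉ S) : coeff s P = 0 := by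
    rw [hP, coeff_sum]
    refine Finset.sum_eq_zero fun u _ => ?_
    rw [coeff_monomial, if_neg]
    rintro rfl
    exact hs u.2
  refine ⟨P, fun h => ht ?_, fun s hs => ?_, fun i => ?_, fun s => ?_⟩
  · ext s
    rw [← hcoeff, h, coeff_zero, Pi.zero_apply]
  · by_contra h
    exact mem_support_iff.mp hs (hcoeff_out s h)
  · rw [← Finset.sum_coe_sort]
    simp only [hcoeff]
    exact congrFun hAt i
  · by_cases hs : s ∈ S
    · exact hcoeff ⟨s, hs⟩ ▸ hbound ⟨s, hs⟩
    · rw [hcoeff_out s hs, Int.cast_zero, abs_zero]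
      positivity

lemma coeff_translate_const [Fintype σ] {K : Type*} [CommRing K] [IsDomain K] [CharZero K]
    {S : Finset (σ →₀ ℕ)} {P : MvPolynomial σ K} (hP : P.support ⊆ S) (ξ : K) (s : σ →₀ ℕ) :
    coeff s (translate (fun _ => ξ) P) =
      ∑ u ∈ S, coeff u P * finsuppChoose u s * ξ ^ ∑ h, (u h - s h) := by
  rw [coeff_translate, ← Finset.sum_subset hP]
  · conv_lhs => rw [← support_sum_monomial_coeff P, map_sum, map_sum]
    refine Finset.sum_congr rfl fun u _ => ?_
    rw [hasseDeriv_monomial, eval_monomial, Finsupp.prod_fintype _ _ fun _ => pow_zero _,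
      Finset.prod_pow_eq_pow_sum]
    rfl
  · intro u _ hu
    rw [notMem_support_iff.mp hu, zero_mul, zero_mul]

lemma sum_sub_le_of_mem_exponentBox [Fintype σ] [DecidableEq σ] {r : σ → ℕ} {u : σ →₀ ℕ}
    (hu : u ∈ exponentBox r) (s : σ →₀ ℕ) : ∑ h, (u h - s h) ≤ ∑ h, r h :=
  Finset.sum_le_sum fun h _ => (Nat.sub_le _ _).trans (mem_exponentBox.mp hu h)

lemma coeff_translate_const_eq_zero [Fintype σ] [DecidableEq σ] {r : σ → ℕ}
    {P : MvPolynomial σ ℤ} (hP : P.support ⊆ exponentBox r) {ξ : ℝ} {d : ℕ} {a : ℤ} (ha : a ≠ 0)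
    {b : Fin d → ℝ} {v : ℕ → Fin d → ℤ}
    (hv : ∀ n ≤ ∑ h, r h, (a : ℝ) ^ (∑ h, r h) * ξ ^ n = ∑ l, v n l * b l) {s : σ →₀ ℕ}
    (hs : ∀ l, ∑ u ∈ exponentBox r,
      finsuppChoose u s * v (∑ h, (u h - s h)) l * coeff u P = 0) :
    coeff s (translate (fun _ => ξ) (map (Int.castRingHom ℝ) P)) = 0 := by
  have ha' : (a : ℝ) ^ (∑ h, r h) ≠ 0 := pow_ne_zero _ (Int.cast_ne_zero.mpr ha)
  refine (mul_eq_zero.mp (?_ : (a : ℝ) ^ (∑ h, r h) * _ = 0)).resolve_left ha'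
  rw [coeff_translate_const ((support_map_subset _ _).trans hP), Finset.mul_sum]
  calc ∑ u ∈ exponentBox r, (a : ℝ) ^ (∑ h, r h) *
        (coeff u (map (Int.castRingHom ℝ) P) * finsuppChoose u s * ξ ^ ∑ h, (u h - s h))
      = ∑ u ∈ exponentBox r, ∑ l,
        ((finsuppChoose u s * v (∑ h, (u h - s h)) l * coeff u P : ℤ) : ℝ) * b l := by
        refine Finset.sum_congr rfl fun u hu => ?_
        rw [mul_left_comm, hv _ (sum_sub_le_of_mem_exponentBox hu s), Finset.mul_sum, coeff_map]
        refine Finset.sum_congr rfl fun l _ => ?_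
        push_cast
        rw [eq_intCast]
        ring
    _ = ∑ l, ((∑ u ∈ exponentBox r,
        finsuppChoose u s * v (∑ h, (u h - s h)) l * coeff u P : ℤ) : ℝ) * b l := by
        rw [Finset.sum_comm]
        push_cast
        simp only [Finset.sum_mul]
    _ = 0 := by simp only [hs, Int.cast_zero, zero_mul, Finset.sum_const_zero]

lemma degreeOf_le_of_support_subset_exponentBox [Fintype σ] [DecidableEq σ] {r : σ → ℕ}
    {R : Type*} [CommSemiring R] {P : MvPolynomial σ R} (hP : P.support ⊆ exponentBox r) (h : σ) :
    degreeOf h P ≤ r h :=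
  degreeOf_le_iff.mpr fun _ hs => mem_exponentBox.mp (hP hs) h

lemma finsuppChoose_le_of_mem_exponentBox [Fintype σ] [DecidableEq σ] {r : σ → ℕ}
    {u : σ →₀ ℕ} (hu : u ∈ exponentBox r) (s : σ →₀ ℕ) :
    finsuppChoose u s ≤ 2 ^ ∑ h, r h := by
  refine (finsuppChoose_le_two_pow u s).trans (Nat.pow_le_pow_right two_pos ?_)
  rw [Finsupp.degree_eq_sum]
  exact Finset.sum_le_sum fun h _ => mem_exponentBox.mp hu h

lemma l1Norm_le_pow_of_support_subset_exponentBox [Fintype σ] [DecidableEq σ] {r : σ → ℕ}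
    {P : MvPolynomial σ ℤ} {A : ℝ} (hP : P.support ⊆ exponentBox r)
    (hcoeff : ∀ s, |((coeff s P : ℤ) : ℝ)| ≤ (exponentBox r).card * (2 * A) ^ ∑ h, r h) :
    l1Norm P ≤ (8 * A) ^ ∑ h, r h := by
  have hbox : ((exponentBox r).card : ℝ) ≤ 2 ^ ∑ h, r h := by exact_mod_cast card_exponentBox_le r
  have hpow : 0 ≤ (2 * A) ^ ∑ h, r h := nonneg_of_mul_nonneg_right
    ((abs_nonneg _).trans (hcoeff 0)) (by exact_mod_cast Finset.card_pos.mpr ⟨0, by simp⟩)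
  calc l1Norm P ≤ (exponentBox r).card * ((exponentBox r).card * (2 * A) ^ ∑ h, r h) :=
        l1Norm_le_card_mul hP fun s => by
          rw [Int.norm_eq_abs]
          exact hcoeff s
    _ ≤ 2 ^ (∑ h, r h) * (2 ^ (∑ h, r h) * (2 * A) ^ ∑ h, r h) := by gcongr
    _ = (8 * A) ^ ∑ h, r h := by
        rw [← mul_pow, ← mul_pow]
        ring

lemma exists_index_ge_of_pow_mul_pow_eq_sum [Fintype σ] [Nonempty σ] {ξ : ℝ} {d : ℕ} (hd : 0 < d)
    {A : ℝ} (hA : 1 ≤ A) {a : ℤ} (ha : a ≠ 0) {b : Fin d → ℝ}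
    (hpow : ∀ N n : ℕ, n ≤ N → ∃ v : Fin d → ℤ, (∀ l, |(v l : ℝ)| ≤ A ^ N) ∧
      (a : ℝ) ^ N * ξ ^ n = ∑ l, v l * b l)
    {r : σ → ℕ} (hr : ∀ h, 0 < r h) {ε : ℝ} (hε : 0 < ε) (hε₂ : ε < 1 / 2)
    (hdε : d * Real.exp (-2 * ε ^ 2 * Fintype.card σ) ≤ 1 / 2) :
    ∃ P : MvPolynomial σ ℤ, P ≠ 0 ∧ (∀ h, degreeOf h P ≤ r h) ∧
      l1Norm P ≤ (8 * A) ^ (∑ h, r h) ∧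
      translate (fun _ => ξ) (map (Int.castRingHom ℝ) P) ∈
        weightFiltration ℝ (indexWeight r) ((1 / 2 - ε) * Fintype.card σ) := by
  classical
  choose! v hv hvsum using hpow
  set R := ∑ h, r h
  set low := (exponentBox r).filter fun s => indexWeight r s < (1 / 2 - ε) * Fintype.card σ
  have hzero : 0 ∈ low := Finset.mem_filter.mpr
    ⟨by simp, by rw [map_zero]; exact mul_pos (by linarith) (by exact_mod_cast Fintype.card_pos)⟩
  have : Nonempty low := ⟨0, hzero⟩
  have : Nonempty (Fin d) := ⟨⟨0, hd⟩⟩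
  have hcard : 2 * Fintype.card (low × Fin d) ≤ (exponentBox r).card := by
    rw [Fintype.card_prod, Fintype.card_fin, Fintype.card_coe]
    exact two_mul_card_indexWeight_lt_mul_le hr hε hdε
  obtain ⟨P, hP, hsupp, hcoeff, hbound⟩ := exists_ne_zero_sum_mul_coeff_eq_zero (exponentBox r)
    (fun (i : low × Fin d) u => finsuppChoose u i.1 * v R (∑ h, (u h - i.1.1 h)) i.2) hcard
    (M := (2 * A) ^ R) (one_le_pow₀ (by linarith)) fun i u hu => by
      rw [Int.cast_mul, Int.cast_natCast, abs_mul, Nat.abs_cast, mul_pow]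
      gcongr
      exacts [by exact_mod_cast finsuppChoose_le_of_mem_exponentBox hu i.1,
        hv R _ (sum_sub_le_of_mem_exponentBox hu i.1) i.2]
  refine ⟨P, hP, degreeOf_le_of_support_subset_exponentBox hsupp,
    l1Norm_le_pow_of_support_subset_exponentBox hsupp hbound, ?_⟩
  refine mem_weightFiltration.mpr fun s => not_imp_comm.mp fun hs => ?_
  refine coeff_translate_const_eq_zero hsupp ha (fun n hn => hvsum R n hn) fun l => ?_
  by_cases hbox : s ∈ exponentBox r
  · exact hcoeff (⟨s, Finset.mem_filter.mpr ⟨hbox, not_le.mp hs⟩⟩, l)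
  · refine Finset.sum_eq_zero fun u hu => ?_
    rw [finsuppChoose_eq_zero_of_not_le, Nat.cast_zero, zero_mul, zero_mul]
    exact fun hle => hbox (mem_exponentBox.mpr fun h => (hle h).trans (mem_exponentBox.mp hu h))

theorem exists_auxiliaryPolynomial {ξ : ℝ} (hξ : IsAlgebraic ℤ ξ) :
    ∃ (d : ℕ) (B : ℝ), 1 ≤ B ∧ ∀ (m : ℕ) (r : Fin m → ℕ) (ε : ℝ), 0 < m → (∀ h, 0 < r h) →
      0 < ε → ε < 1 / 2 → d * Real.exp (-2 * ε ^ 2 * m) ≤ 1 / 2 →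
      ∃ P : MvPolynomial (Fin m) ℤ, P ≠ 0 ∧ (∀ h, degreeOf h P ≤ r h) ∧
        l1Norm P ≤ B ^ (∑ h, r h) ∧ translate (fun _ => ξ) (map (Int.castRingHom ℝ) P) ∈
          weightFiltration ℝ (indexWeight r) ((1 / 2 - ε) * m) := by
  obtain ⟨d, A, a, b, hd, hA, ha, hpow⟩ := exists_pow_mul_pow_eq_sum_of_isAlgebraic hξ
  refine ⟨d, 8 * A, by linarith, fun m r ε hm hr hε hε₂ hdε => ?_⟩
  have : Nonempty (Fin m) := ⟨⟨0, hm⟩⟩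
  rw [← Fintype.card_fin m] at hdε
  have := exists_index_ge_of_pow_mul_pow_eq_sum hd hA ha hpow hr hε hε₂ hdε
  rwa [Fintype.card_fin] at this

end AuxiliaryPolynomial

/-! ### Roth's theorem -/

lemma l1Norm_map_intCast {σ : Type*} (P : MvPolynomial σ ℤ) :
    l1Norm (map (Int.castRingHom ℝ) P) = l1Norm P := by
  rw [l1Norm, support_map_of_injective _ Int.cast_injective, l1Norm]
  simp only [coeff_map, eq_intCast, Int.norm_cast_real]

lemma ratCast_eval_map_intCast {σ : Type*} (Q : MvPolynomial σ ℤ) (x : σ → ℚ) :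
    ((eval x (map (Int.castRingHom ℚ) Q) : ℚ) : ℝ) =
      eval (fun h => (x h : ℝ)) (map (Int.castRingHom ℝ) Q) := by
  rw [eval_map, eval_map, ← Rat.coe_castHom, eval₂_comp_left]
  exact congrArg (fun f => eval₂ f _ Q) (RingHom.ext_int _ _)

section Bounds

variable {σ : Type*} [Fintype σ]

lemma exists_eval_mul_prod_den_pow_eq_intCast {Q : MvPolynomial σ ℤ} {r : σ → ℕ}
    (hQ : ∀ h, degreeOf h Q ≤ r h) (x : σ → ℚ) :
    ∃ z : ℤ, eval x (map (Int.castRingHom ℚ) Q) * ∏ h, ((x h).den : ℚ) ^ r h = z := by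
  refine ⟨∑ s ∈ Q.support, coeff s Q * ∏ h, ((x h).num ^ s h * (x h).den ^ (r h - s h)), ?_⟩
  rw [eval_map, eval₂_eq', Finset.sum_mul]
  push_cast
  refine Finset.sum_congr rfl fun s hs => ?_
  rw [mul_assoc, ← Finset.prod_mul_distrib, eq_intCast]
  congr 1
  refine Finset.prod_congr rfl fun h _ => ?_
  rw [← Rat.mul_den_eq_num, mul_pow, mul_assoc, ← pow_add,
    Nat.add_sub_cancel' (degreeOf_le_iff.mp (hQ h) s hs)]

lemma one_le_abs_eval_mul_prod_den_pow {Q : MvPolynomial σ ℤ} {r : σ → ℕ}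
    (hQ : ∀ h, degreeOf h Q ≤ r h) {x : σ → ℚ} (hx : eval x (map (Int.castRingHom ℚ) Q) ≠ 0) :
    1 ≤ |eval (fun h => (x h : ℝ)) (map (Int.castRingHom ℝ) Q)| *
      ∏ h, ((x h).den : ℝ) ^ r h := by
  obtain ⟨z, hz⟩ := exists_eval_mul_prod_den_pow_eq_intCast hQ x
  have hz₀ : z ≠ 0 := by
    rintro rfl
    refine mul_ne_zero hx (Finset.prod_ne_zero_iff.mpr fun h _ => pow_ne_zero _ ?_) hz
    exact_mod_cast (x h).den_nz
  have hz' : eval (fun h => (x h : ℝ)) (map (Int.castRingHom ℝ) Q) *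
      ∏ h, ((x h).den : ℝ) ^ r h = z := by
    rw [← ratCast_eval_map_intCast]
    exact_mod_cast hz
  rw [← abs_of_nonneg (Finset.prod_nonneg fun h _ => by positivity :
    0 ≤ ∏ h, ((x h).den : ℝ) ^ r h), ← abs_mul, hz']
  exact_mod_cast Int.one_le_abs hz₀

lemma abs_eval_le_of_mem_weightFiltration {σ : Type*} [Finite σ] {Q : MvPolynomial σ ℝ}
    {r : σ → ℕ} {c τ : ℝ} (hτ : 0 ≤ τ) (hQ : Q ∈ weightFiltration ℝ (indexWeight r) c) {y : σ → ℝ}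
    (hy : ∀ h, |y h| ≤ Real.exp (-(τ / r h))) :
    |eval y Q| ≤ l1Norm Q * Real.exp (-(τ * c)) := by
  have := Fintype.ofFinite σ
  rw [eval_eq', l1Norm, Finset.sum_mul]
  refine (Finset.abs_sum_le_sum_abs _ _).trans (Finset.sum_le_sum fun s hs => ?_)
  rw [abs_mul, Real.norm_eq_abs]
  gcongr
  calc |∏ h, y h ^ s h| = ∏ h, |y h| ^ s h := by simp only [Finset.abs_prod, abs_pow]
    _ ≤ ∏ h, Real.exp (-(τ / r h)) ^ s h := by
        gcongr with h
        exact hy h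
    _ = Real.exp (-(τ * indexWeight r s)) := by
        simp only [← Real.exp_nat_mul, ← Real.exp_sum, indexWeight_eq_sum, Finset.mul_sum,
          ← Finset.sum_neg_distrib]
        congr! 2
        ring
    _ ≤ Real.exp (-(τ * c)) := by
        gcongr
        exact mem_weightFiltration.mp hQ s (mem_support_iff.mp hs)

lemma l1Norm_translate_le {R : Type*} [NormedCommRing R] [NormOneClass R] {P : MvPolynomial σ R}
    {r : σ → ℕ} (hP : ∀ h, degreeOf h P ≤ r h) (a : σ → R) :
    l1Norm (translate a P) ≤ l1Norm P * ∏ h, (1 + ‖a h‖) ^ r h := by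
  have hlinear (h : σ) : l1Norm (X h + C (a h)) ≤ 1 + ‖a h‖ := by
    refine (l1Norm_add_le _ _).trans_eq ?_
    rw [X, C_apply, l1Norm_monomial, l1Norm_monomial, norm_one]
  rw [translate, aeval_def, eval₂_eq', l1Norm_eq_sum (P := P) subset_rfl, Finset.sum_mul]
  refine (l1Norm_sum_le _ _).trans (Finset.sum_le_sum fun s hs => ?_)
  rw [algebraMap_eq]
  refine (l1Norm_mul_le _ _).trans ?_
  rw [C_apply, l1Norm_monomial]
  gcongr
  refine (l1Norm_prod_le _ _).trans ?_
  gcongr with h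
  · exact fun _ _ => l1Norm_nonneg _
  · rw [← Finset.card_range (s h), ← Finset.prod_const]
    refine (l1Norm_prod_le _ _).trans ?_
    rw [Finset.prod_const, Finset.card_range]
    calc l1Norm (X h + C (a h)) ^ s h ≤ (1 + ‖a h‖) ^ s h := by
          gcongr
          exacts [l1Norm_nonneg _, hlinear h]
      _ ≤ (1 + ‖a h‖) ^ r h :=
          pow_le_pow_right₀ (by simp) (degreeOf_le_iff.mp (hP h) s hs)

lemma degreeOf_translate_le {σ R : Type*} [Finite σ] [CommRing R] [IsDomain R] [CharZero R]
    (a : σ → R) (P : MvPolynomial σ R) (h : σ) : degreeOf h (translate a P) ≤ degreeOf h P := by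
  have := Fintype.ofFinite σ
  refine degreeOf_le_iff.mpr fun s hs => ?_
  rw [mem_support_iff, coeff_translate] at hs
  obtain ⟨t, ht⟩ := ne_zero_iff.mp (ne_of_apply_ne (eval a) (hs.trans_eq (map_zero _).symm))
  rw [coeff_hasseDeriv] at ht
  exact (Nat.le_add_left _ _).trans
    (degreeOf_le_iff.mp le_rfl _ (mem_support_iff.mpr (left_ne_zero_of_mul ht)))

lemma abs_coeff_translate_le {P : MvPolynomial σ ℤ} {r : σ → ℕ} (hP : ∀ h, degreeOf h P ≤ r h)
    {ξ c τ : ℝ} (hτ : 0 ≤ τ) (hindex : translate (fun _ => ξ) (map (Int.castRingHom ℝ) P) ∈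
      weightFiltration ℝ (indexWeight r) c)
    {x : σ → ℝ} (hx : ∀ h, |x h - ξ| ≤ Real.exp (-(τ / r h))) (s : σ →₀ ℕ) :
    |coeff s (translate x (map (Int.castRingHom ℝ) P))| ≤
      (2 * (1 + |ξ|)) ^ (∑ h, r h) * l1Norm P * Real.exp (-(τ * (c - indexWeight r s))) := by
  set Q := map (Int.castRingHom ℝ) P
  have hQ (h : σ) : degreeOf h Q ≤ r h :=
    degreeOf_le_iff.mpr fun s hs => degreeOf_le_iff.mp (hP h) s (support_map_subset _ _ hs)
  have htranslate : translate x Q = translate (fun h => x h - ξ) (translate (fun _ => ξ) Q) := by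
    rw [translate_translate]
    congr
    ext
    simp
  rw [htranslate, coeff_translate]
  refine (abs_eval_le_of_mem_weightFiltration hτ (hasseDeriv_mem_weightFiltration hindex s)
    hx).trans ?_
  gcongr
  calc l1Norm (hasseDeriv s (translate (fun _ => ξ) Q))
      ≤ 2 ^ (∑ h, r h) * l1Norm (translate (fun _ => ξ) Q) :=
        l1Norm_hasseDeriv_le (fun h => (degreeOf_translate_le _ _ h).trans (hQ h)) s
    _ ≤ 2 ^ (∑ h, r h) * (l1Norm Q * ∏ h, (1 + ‖ξ‖) ^ r h) := by
        gcongr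
        exact l1Norm_translate_le hQ _
    _ = (2 * (1 + |ξ|)) ^ (∑ h, r h) * l1Norm P := by
        rw [l1Norm_map_intCast, Finset.prod_pow_eq_pow_sum, mul_pow, Real.norm_eq_abs]
        ring

lemma one_le_of_coeff_translate_ne_zero {P : MvPolynomial σ ℤ} {r : σ → ℕ}
    (hP : ∀ h, degreeOf h P ≤ r h) {ξ c τ : ℝ} (hτ : 0 ≤ τ)
    (hindex : translate (fun _ => ξ) (map (Int.castRingHom ℝ) P) ∈
      weightFiltration ℝ (indexWeight r) c)
    {x : σ → ℚ} (hx : ∀ h, |ξ - x h| ≤ Real.exp (-(τ / r h))) {s : σ →₀ ℕ}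
    (hs : coeff s (translate x (map (Int.castRingHom ℚ) P)) ≠ 0) :
    1 ≤ (2 * (1 + |ξ|)) ^ (∑ h, r h) * l1Norm P * Real.exp (-(τ * (c - indexWeight r s))) *
      ∏ h, ((x h).den : ℝ) ^ r h := by
  rw [coeff_translate, hasseDeriv_map] at hs
  refine (one_le_abs_eval_mul_prod_den_pow
    (fun h => (degreeOf_hasseDeriv_le s P h).trans (hP h)) hs).trans ?_
  gcongr
  rw [← hasseDeriv_map, ← coeff_translate]
  exact abs_coeff_translate_le hP hτ hindex (fun h => abs_sub_comm ξ (x h) ▸ hx h) s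

end Bounds

section RothTheorem

lemma finite_rat_abs_sub_le_and_den_le (ξ B : ℝ) (N : ℕ) :
    {x : ℚ | |ξ - x| ≤ B ∧ x.den ≤ N}.Finite := by
  have hbox := (Set.finite_Icc (-⌈(|ξ| + B) * N⌉) ⌈(|ξ| + B) * N⌉).prod (Set.finite_Iic N)
  refine (hbox.preimage (f := fun x : ℚ => (x.num, x.den))
    (fun x _ y _ hxy => Rat.ext (congrArg Prod.fst hxy) (congrArg Prod.snd hxy))).subset ?_
  rintro x ⟨hx, hden⟩
  refine ⟨abs_le.mp (Int.cast_le (R := ℝ).mp (le_trans ?_ (Int.le_ceil _))), hden⟩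
  have hnum : (x.num : ℝ) = x * x.den := by exact_mod_cast (Rat.mul_den_eq_num x).symm
  have habs : |(x : ℝ)| ≤ |ξ| + B := by
    linarith [abs_sub_abs_le_abs_sub (x : ℝ) ξ, abs_sub_comm (x : ℝ) ξ]
  rw [Int.cast_abs, hnum, abs_mul, Nat.abs_cast]
  gcongr
  exact (abs_nonneg _).trans habs

lemma exists_le_log_den_of_infinite {ξ B : ℝ} {S : Set ℚ} (hS : S.Infinite)
    (hB : ∀ x ∈ S, |ξ - x| ≤ B) (M : ℝ) : ∃ x ∈ S, M ≤ Real.log x.den := by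
  by_contra! hM
  refine hS ((finite_rat_abs_sub_le_and_den_le ξ B ⌈Real.exp M⌉₊).subset fun x hx =>
    ⟨hB x hx, Nat.cast_le (α := ℝ).mp (le_trans ?_ (Nat.le_ceil _))⟩)
  exact (Real.log_le_iff_le_exp (by exact_mod_cast x.pos)).mp (hM x hx).le

lemma exists_seq_mul_le {α : Type*} {S : Set α} {g : α → ℝ} (hg : ∀ M, ∃ a ∈ S, M ≤ g a)
    (K M : ℝ) :
    ∃ a : ℕ → α, (∀ n, a n ∈ S ∧ M ≤ g (a n)) ∧ ∀ i j, i < j → K * g (a i) ≤ g (a j) := by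
  refine exists_seq_of_forall_finset_exists (fun a => a ∈ S ∧ M ≤ g a)
    (fun a b => K * g a ≤ g b) fun T _ => ?_
  obtain ⟨b, hbS, hb⟩ := hg (|M| + ∑ a ∈ T, |K * g a|)
  have hsum : 0 ≤ ∑ a ∈ T, |K * g a| := Finset.sum_nonneg fun _ _ => abs_nonneg _
  refine ⟨b, ⟨hbS, by linarith [le_abs_self M]⟩, fun a ha => ?_⟩
  linarith [Finset.single_le_sum (f := fun a => |K * g a|) (fun _ _ => abs_nonneg _) ha,
    le_abs_self (K * g a), abs_nonneg M]

lemma mul_ceil_div_le {a b c : ℝ} (ha : 0 ≤ a) (hb : 0 < b) (hbc : b ≤ c) :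
    ⌈a / b⌉₊ * b ≤ a + c := by
  calc (⌈a / b⌉₊ : ℝ) * b ≤ (a / b + 1) * b := by
        gcongr
        exact (Nat.ceil_lt_add_one (by positivity)).le
    _ = a + b := by field_simp
    _ ≤ a + c := by gcongr

lemma exists_isRothDegrees {m : ℕ} {ε η : ℝ} (hε : 0 < ε) (hε₁ : ε ≤ 1) (hη : 0 < η)
    {x : Fin m → ℚ} (hx : ∀ i, 2 / η ≤ Real.log (x i).den)
    (hgrow : ∀ i j, i < j → 2 / η * Real.log (x i).den ≤ Real.log (x j).den) :
    ∃ H > 0, ∃ r, IsRothDegrees (· < ·) η r x H ∧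
      ∀ i, r i * Real.log (x i).den ≤ (1 + ε) * H := by
  set g : Fin m → ℝ := fun i => Real.log (x i).den
  have hpos (i : Fin m) : 0 < g i := (by positivity : 0 < 2 / η).trans_le (hx i)
  set H := 1 + ∑ i, g i / ε
  have hterm (i : Fin m) : 0 < g i / ε := div_pos (hpos i) hε
  have hH₀ : 0 < H := add_pos_of_pos_of_nonneg one_pos (Finset.sum_nonneg fun i _ => (hterm i).le)
  have hgH (i : Fin m) : g i ≤ ε * H := by
    rw [← div_le_iff₀' hε]
    linarith [Finset.single_le_sum (fun j _ => (hterm j).le) (Finset.mem_univ i)]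
  have hlower (i : Fin m) : H ≤ ⌈H / g i⌉₊ * g i := (div_le_iff₀ (hpos i)).mp (Nat.le_ceil _)
  have hupper (i : Fin m) : ⌈H / g i⌉₊ * g i ≤ H + ε * H :=
    mul_ceil_div_le hH₀.le (hpos i) (hgH i)
  have htwice (i : Fin m) : ⌈H / g i⌉₊ * g i ≤ 2 * H := (hupper i).trans (by nlinarith)
  refine ⟨H, hH₀, fun i => ⌈H / g i⌉₊, ⟨fun i => Nat.ceil_pos.mpr (div_pos hH₀ (hpos i)), hlower,
    fun i => ?_, fun i j hij => ?_⟩, fun i => (hupper i).trans_eq (by ring)⟩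
  · refine le_of_mul_le_mul_left ?_ (by positivity : 0 < 2 / η)
    calc 2 / η * ⌈H / g i⌉₊ ≤ ⌈H / g i⌉₊ * g i := by
          rw [mul_comm]
          gcongr
          exact hx i
      _ ≤ 2 * H := htwice i
      _ = 2 / η * (η * H) := by field_simp
  · refine le_of_mul_le_mul_right ?_ (hpos j)
    calc ⌈H / g j⌉₊ * g j ≤ 2 * (⌈H / g i⌉₊ * g i) := (htwice j).trans (by linarith [hlower i])
      _ = η * ⌈H / g i⌉₊ * (2 / η * g i) := by field_simp
      _ ≤ η * ⌈H / g i⌉₊ * g j := by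
          gcongr
          exact hgrow i j hij

lemma exists_pos_mul_exp_neg_le (d : ℕ) {ε : ℝ} (hε : 0 < ε) :
    ∃ m : ℕ, 0 < m ∧ d * Real.exp (-2 * ε ^ 2 * m) ≤ 1 / 2 := by
  have htendsto : Filter.Tendsto (fun m : ℕ => d * Real.exp (-2 * ε ^ 2 * m)) Filter.atTop
      (nhds (d * 0)) := by
    refine (Real.tendsto_exp_atBot.comp ?_).const_mul _
    exact tendsto_natCast_atTop_atTop.const_mul_atTop_of_neg (by nlinarith [pow_pos hε 2])
  rw [mul_zero] at htendsto
  exact ((Filter.eventually_gt_atTop 0).and (htendsto.eventually_le_const (by norm_num))).exists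

lemma IsRothDegrees.mono {σ : Type*} {lt : σ → σ → Prop} {η ω H : ℝ} {r : σ → ℕ} {x : σ → ℚ}
    (hr : IsRothDegrees lt η r x H) (hH : 0 ≤ H) (hηω : η ≤ ω) : IsRothDegrees lt ω r x H where
  pos := hr.pos
  le_mul_log_den := hr.le_mul_log_den
  le_mul h := (hr.le_mul h).trans (by gcongr)
  decay i j hij := (hr.decay i j hij).trans (by gcongr)

lemma IsRothDegrees.pow_sum_le_exp {σ : Type*} [Fintype σ] {lt : σ → σ → Prop} {η H D : ℝ}
    {r : σ → ℕ} {x : σ → ℚ} (hr : IsRothDegrees lt η r x H) (hD : 1 ≤ D) :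
    D ^ (∑ h, r h) ≤ Real.exp (η * (Fintype.card σ * Real.log D) * H) := by
  rw [← Real.exp_log (one_pos.trans_le hD), ← Real.exp_nat_mul, Real.log_exp, Real.exp_le_exp]
  have hsum : ((∑ h, r h : ℕ) : ℝ) ≤ Fintype.card σ * (η * H) := by
    rw [Nat.cast_sum, ← nsmul_eq_mul]
    exact Finset.sum_le_card_nsmul _ _ _ fun h _ => hr.le_mul h
  calc ((∑ h, r h : ℕ) : ℝ) * Real.log D
      ≤ Fintype.card σ * (η * H) * Real.log D := by
        gcongr
        exact Real.log_nonneg hD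
    _ = η * (Fintype.card σ * Real.log D) * H := by ring

lemma exists_index_lt_and_le_index {ξ : ℝ} (hξ : IsAlgebraic ℤ ξ) {ε : ℝ} (hε : 0 < ε)
    (hε₁ : ε < 1 / 2) :
    ∃ m : ℕ, 0 < m ∧ ∃ η > 0, ∀ (r : Fin m → ℕ) (x : Fin m → ℚ) (H : ℝ), 0 < H →
      IsRothDegrees (· < ·) η r x H → ∃ P : MvPolynomial (Fin m) ℤ, (∀ h, degreeOf h P ≤ r h) ∧
        (2 * (1 + |ξ|)) ^ (∑ h, r h) * l1Norm P ≤ Real.exp (ε * H) ∧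
        translate (fun _ => ξ) (map (Int.castRingHom ℝ) P) ∈
          weightFiltration ℝ (indexWeight r) ((1 / 2 - ε) * m) ∧
        ∃ s, coeff s (translate x (map (Int.castRingHom ℚ) P)) ≠ 0 ∧ indexWeight r s ≤ ε := by
  obtain ⟨d, B, hB, hauxiliary⟩ := exists_auxiliaryPolynomial hξ
  obtain ⟨m, hm, hdm⟩ := exists_pos_mul_exp_neg_le d hε
  obtain ⟨ω, hω, hroth⟩ := roth_lemma m ε hε
  set D := 2 * (1 + |ξ|) * B
  have hBD : B ≤ D := le_mul_of_one_le_left (by linarith) (by linarith [abs_nonneg ξ])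
  have hmlog : 0 ≤ m * Real.log D := mul_nonneg m.cast_nonneg (Real.log_nonneg (hB.trans hBD))
  have hmin : 0 < min ω ε := lt_min hω hε
  refine ⟨m, hm, min ω ε / (m * Real.log D + 1), by positivity, fun r x H hH hr => ?_⟩
  have hpow : D ^ (∑ h, r h) ≤ Real.exp (min ω ε * H) := by
    refine (hr.pow_sum_le_exp (hB.trans hBD)).trans (Real.exp_le_exp.mpr ?_)
    rw [Fintype.card_fin]
    gcongr
    rw [div_mul_eq_mul_div, div_le_iff₀ (by positivity)]
    gcongr
    linarith
  have hηω : min ω ε / (m * Real.log D + 1) ≤ ω :=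
    (div_le_self hmin.le (by linarith)).trans (min_le_left _ _)
  obtain ⟨P, hP, hdeg, hnorm, hindex⟩ := hauxiliary m r ε hm hr.pos hε hε₁ hdm
  refine ⟨P, hdeg, ?_, hindex, hroth r x H P ⟨hr.mono hH.le hηω, hP, hdeg, ?_⟩⟩
  · calc (2 * (1 + |ξ|)) ^ (∑ h, r h) * l1Norm P
        ≤ (2 * (1 + |ξ|)) ^ (∑ h, r h) * B ^ (∑ h, r h) := by gcongr
      _ = D ^ (∑ h, r h) := by rw [← mul_pow]
      _ ≤ Real.exp (min ω ε * H) := hpow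
      _ ≤ Real.exp (ε * H) := by
          gcongr
          exact min_le_right _ _
  · calc l1Norm P ≤ B ^ (∑ h, r h) := hnorm
      _ ≤ D ^ (∑ h, r h) := by gcongr
      _ ≤ Real.exp (min ω ε * H) := hpow
      _ ≤ Real.exp (ω * H) := by
          gcongr
          exact min_le_left _ _

lemma roth_exponent_neg {δ m : ℝ} (hδ : 0 < δ) (hδ₁ : δ ≤ 1) (hm : 1 ≤ m) :
    δ / 20 - (2 + δ) * ((1 / 2 - δ / 20) * m - δ / 20) + m * (1 + δ / 20) < 0 := by
  nlinarith [mul_pos hδ hδ, mul_le_mul_of_nonneg_left hδ₁ hδ.le]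

lemma one_div_den_rpow_le_exp {x : ℚ} {r : ℕ} {H c : ℝ} (hr : 0 < r) (hc : 0 ≤ c)
    (hH : H ≤ r * Real.log x.den) : 1 / (x.den : ℝ) ^ c ≤ Real.exp (-(c * H / r)) := by
  rw [one_div, ← Real.rpow_neg x.den.cast_nonneg,
    Real.rpow_def_of_pos (by exact_mod_cast x.pos), Real.exp_le_exp, mul_div_assoc,
    mul_neg, neg_le_neg_iff, mul_comm]
  gcongr
  rwa [div_le_iff₀' (by exact_mod_cast hr)]

lemma prod_den_pow_le_exp {σ : Type*} [Fintype σ] {x : σ → ℚ} {r : σ → ℕ} {M : ℝ}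
    (hM : ∀ h, r h * Real.log (x h).den ≤ M) :
    ∏ h, ((x h).den : ℝ) ^ r h ≤ Real.exp (Fintype.card σ * M) := by
  have hexp (h : σ) : ((x h).den : ℝ) ^ r h = Real.exp (r h * Real.log (x h).den) := by
    rw [Real.exp_nat_mul, Real.exp_log (by exact_mod_cast (x h).pos)]
  rw [Finset.prod_congr rfl fun h _ => hexp h, ← Real.exp_sum, Real.exp_le_exp, ← nsmul_eq_mul]
  exact Finset.sum_le_card_nsmul _ _ _ fun h _ => hM h

lemma finite_rat_abs_sub_lt_one_div_den_rpow_of_le_one {ξ : ℝ} (hξ : IsAlgebraic ℤ ξ) {δ : ℝ}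
    (hδ : 0 < δ) (hδ₁ : δ ≤ 1) : {x : ℚ | |ξ - x| < 1 / (x.den : ℝ) ^ (2 + δ)}.Finite := by
  by_contra hinfinite
  set S := {x : ℚ | |ξ - x| < 1 / (x.den : ℝ) ^ (2 + δ)}
  have hbounded (x : ℚ) (hx : x ∈ S) : |ξ - x| ≤ 1 := hx.le.trans <|
    div_le_one_of_le₀ (Real.one_le_rpow (by exact_mod_cast x.pos) (by linarith)) (by positivity)
  obtain ⟨m, hm, η, hη, hpolynomial⟩ :=
    exists_index_lt_and_le_index hξ (ε := δ / 20) (by positivity) (by linarith)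
  obtain ⟨x, hx, hgrow⟩ :=
    exists_seq_mul_le (exists_le_log_den_of_infinite hinfinite hbounded) (2 / η) (2 / η)
  obtain ⟨H, hH, r, hr, hupper⟩ := exists_isRothDegrees (m := m) (x := fun i => x i)
    (by positivity : 0 < δ / 20) (by linarith) hη (fun i => (hx i).2) (fun i j => hgrow i j)
  obtain ⟨P, hdeg, hnorm, hindex, s, hs, hs_index⟩ := hpolynomial r _ H hH hr
  have hclose (i : Fin m) : |ξ - x i| ≤ Real.exp (-((2 + δ) * H / r i)) := (hx i).1.le.trans <|
    one_div_den_rpow_le_exp (hr.pos i) (by positivity) (hr.le_mul_log_den i)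
  have hone := calc
    1 ≤ (2 * (1 + |ξ|)) ^ (∑ h, r h) * l1Norm P *
        Real.exp (-((2 + δ) * H * ((1 / 2 - δ / 20) * m - indexWeight r s))) *
          ∏ i : Fin m, ((x i).den : ℝ) ^ r i :=
      one_le_of_coeff_translate_ne_zero hdeg (by positivity) hindex hclose hs
    _ ≤ Real.exp (δ / 20 * H) * Real.exp (-((2 + δ) * H * ((1 / 2 - δ / 20) * m - δ / 20))) *
          Real.exp (m * ((1 + δ / 20) * H)) := by
      gcongr
      exact (prod_den_pow_le_exp hupper).trans_eq (by rw [Fintype.card_fin])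
    _ = Real.exp ((δ / 20 - (2 + δ) * ((1 / 2 - δ / 20) * m - δ / 20) + m * (1 + δ / 20)) * H) := by
      rw [← Real.exp_add, ← Real.exp_add]
      ring_nf
  rw [Real.one_le_exp_iff] at hone
  exact absurd hone (mul_neg_of_neg_of_pos
    (roth_exponent_neg hδ hδ₁ (by exact_mod_cast hm)) hH).not_ge

theorem finite_rat_abs_sub_lt_one_div_den_rpow {ξ : ℝ} (hξ : IsAlgebraic ℤ ξ) {δ : ℝ}
    (hδ : 0 < δ) : {x : ℚ | |ξ - x| < 1 / (x.den : ℝ) ^ (2 + δ)}.Finite := by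
  refine (finite_rat_abs_sub_lt_one_div_den_rpow_of_le_one hξ (lt_min hδ one_pos)
    (min_le_right _ _)).subset (Set.ofPred_subset_ofPred.mpr fun x hx => hx.trans_le ?_)
  have hden : (1 : ℝ) ≤ x.den := by exact_mod_cast x.pos
  gcongr
  exact min_le_left _ _

end RothTheorem

/-! ### Injectivity radius -/

section InjectivityRadius

lemma exists_pos_div_den_rpow_le_abs_sub {ξ : ℝ} (hirr : Irrational ξ) (halg : IsAlgebraic ℤ ξ)
    {δ : ℝ} (hδ : 0 < δ) : ∃ c > 0, ∀ x : ℚ, c / (x.den : ℝ) ^ (2 + δ) ≤ |ξ - x| := by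
  have hfinite := finite_rat_abs_sub_lt_one_div_den_rpow halg hδ
  have hden (x : ℚ) : (0 : ℝ) < (x.den : ℝ) ^ (2 + δ) :=
    Real.rpow_pos_of_pos (by exact_mod_cast x.pos) _
  have hpos (x : ℚ) : 0 < |ξ - x| * (x.den : ℝ) ^ (2 + δ) :=
    mul_pos (abs_pos.mpr (sub_ne_zero.mpr (hirr.ne_rat x))) (hden x)
  have hexceptions := (Filter.eventually_all_finite hfinite).mpr fun x _ =>
    (Ioo_mem_nhdsGT (hpos x) : ∀ᶠ c : ℝ in nhdsWithin 0 (Set.Ioi 0), c ∈ Set.Ioo 0 _)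
  obtain ⟨c, hc, hc₀, hc₁⟩ := (hexceptions.and (Ioo_mem_nhdsGT one_pos)).exists
  refine ⟨c, hc₀, fun x => ?_⟩
  by_cases hx : |ξ - x| < 1 / (x.den : ℝ) ^ (2 + δ)
  · exact (div_le_iff₀ (hden x)).mpr (hc x hx).2.le
  · refine le_trans ?_ (not_lt.mp hx)
    gcongr

lemma exists_pos_div_rpow_le_abs_natCast_mul_sub {ξ : ℝ} (hirr : Irrational ξ)
    (halg : IsAlgebraic ℤ ξ) {δ : ℝ} (hδ : 0 < δ) :
    ∃ c > 0, ∀ (q : ℕ) (p : ℤ), 0 < q → c / (q : ℝ) ^ (1 + δ) ≤ |q * ξ - p| := by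
  obtain ⟨c, hc, h⟩ := exists_pos_div_den_rpow_le_abs_sub hirr halg hδ
  refine ⟨c, hc, fun q p hq => ?_⟩
  have hq' : (0 : ℝ) < q := by exact_mod_cast hq
  have hden : ((p / q : ℚ).den : ℝ) ≤ q := by
    exact_mod_cast Int.le_of_dvd (by exact_mod_cast hq) (Rat.den_dvd p q)
  calc c / (q : ℝ) ^ (1 + δ) = q * (c / (q : ℝ) ^ (2 + δ)) := by
        rw [show 2 + δ = 1 + δ + 1 by ring, Real.rpow_add_one hq'.ne']
        field_simp
    _ ≤ q * (c / ((p / q : ℚ).den : ℝ) ^ (2 + δ)) := by gcongr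
    _ ≤ q * |ξ - (p / q : ℚ)| := by
        gcongr
        exact h _
    _ = |q * ξ - p| := by
        rw [← abs_of_pos hq', ← abs_mul, abs_of_pos hq', mul_sub]
        push_cast
        rw [mul_div_cancel₀ _ hq'.ne']

lemma two_mul_abs_sub_round_le_abs_sin_pi_mul (y : ℝ) :
    2 * |y - round y| ≤ |Real.sin (Real.pi * y)| := by
  have hperiodic : |Real.sin (Real.pi * (y - round y))| = |Real.sin (Real.pi * y)| := by
    rw [mul_sub, mul_comm Real.pi (round y : ℝ), Real.sin_sub_int_mul_pi, abs_mul, abs_neg_one_zpow,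
      one_mul]
  have habs : |Real.pi * (y - round y)| = Real.pi * |y - round y| := by
    rw [abs_mul, abs_of_pos Real.pi_pos]
  have hsmall : |Real.pi * (y - round y)| ≤ Real.pi / 2 := by
    rw [habs]
    nlinarith [abs_sub_round y, Real.pi_pos]
  calc 2 * |y - round y| = 2 / Real.pi * |Real.pi * (y - round y)| := by
        rw [habs]
        field_simp
    _ ≤ |Real.sin (Real.pi * (y - round y))| := Real.mul_abs_le_abs_sin hsmall
    _ = |Real.sin (Real.pi * y)| := hperiodic

lemma two_mul_rpow_le_L {ξ c δ α t : ℝ} (hδ : 0 ≤ 1 + δ) (hα : α * (2 + δ) ≤ 1) (hc : 0 ≤ c)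
    (hξ : ∀ (q : ℕ) (p : ℤ), 0 < q → c / (q : ℝ) ^ (1 + δ) ≤ |q * ξ - p|) (ht : 1 ≤ t) :
    2 * min (1 / 2) (2 * c) * t ^ α ≤ L (2 * Real.pi * ξ) t := by
  have ht₀ : 0 < t := one_pos.trans_le ht
  refine le_ciInf fun k => ?_
  have hk : (0 : ℝ) < k := by exact_mod_cast k.pos
  have hangle : (k : ℝ) * (2 * Real.pi * ξ) / 2 = Real.pi * (k * ξ) := by ring
  rw [hangle]
  rcases le_or_gt (t ^ α) k with htk | hkt
  · calc 2 * min (1 / 2) (2 * c) * t ^ α ≤ 2 * (1 / 2) * t ^ α := by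
          gcongr
          exact min_le_left _ _
      _ ≤ |(k : ℝ)| := by rwa [mul_one_div_cancel two_ne_zero, one_mul, abs_of_pos hk]
      _ ≤ _ := Real.abs_le_sqrt (le_add_of_nonneg_right (by positivity))
  · have hpow : t ^ α * (k : ℝ) ^ (1 + δ) ≤ t := by
      calc t ^ α * (k : ℝ) ^ (1 + δ) ≤ t ^ α * (t ^ α) ^ (1 + δ) := by gcongr
        _ = t ^ (α * (2 + δ)) := by
          rw [← Real.rpow_mul ht₀.le, ← Real.rpow_add ht₀]
          ring_nf
        _ ≤ t ^ (1 : ℝ) := Real.rpow_le_rpow_of_exponent_le ht hα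
        _ = t := Real.rpow_one t
    calc 2 * min (1 / 2) (2 * c) * t ^ α ≤ 2 * (2 * c) * t ^ α := by
          gcongr
          exact min_le_right _ _
      _ ≤ 2 * t * (2 * (c / (k : ℝ) ^ (1 + δ))) := by
          rw [← mul_div_assoc, ← mul_div_assoc, le_div_iff₀ (by positivity)]
          nlinarith
      _ ≤ 2 * t * (2 * |k * ξ - round (k * ξ)|) := by
          gcongr
          exact hξ k _ k.pos
      _ ≤ 2 * t * |Real.sin (Real.pi * (k * ξ))| := by
          gcongr
          exact two_mul_abs_sub_round_le_abs_sin_pi_mul _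
      _ = |2 * t * Real.sin (Real.pi * (k * ξ))| := by
          rw [abs_mul, abs_of_pos (by positivity : 0 < 2 * t)]
      _ ≤ _ := Real.abs_le_sqrt (by nlinarith [sq_nonneg (k : ℝ)])

end InjectivityRadius

end Roth

theorem stmt_5 (ξ : ℝ) (hirr : Irrational ξ) (halg : IsAlgebraic ℚ ξ)
    (α : ℝ) (hα : α ∈ Set.Ioo (0 : ℝ) (1 / 2)) :
    ∃ T C : ℝ, 0 < T ∧ 0 < C ∧
      ∀ t : ℝ, T < t → 2 * C * t ^ α ≤ L (2 * Real.pi * ξ) t := by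
  obtain ⟨hα₀, hα₁⟩ := hα
  have hδ : 0 < 1 / α - 2 := by
    rw [sub_pos, lt_div_iff₀ hα₀]
    linarith
  have hαδ : α * (2 + (1 / α - 2)) ≤ 1 := by
    rw [add_sub_cancel, mul_one_div_cancel hα₀.ne']
  have halgℤ : IsAlgebraic ℤ ξ := (IsFractionRing.isAlgebraic_iff ℤ ℚ ℝ).mpr halg
  obtain ⟨c, hc, hξ⟩ := Roth.exists_pos_div_rpow_le_abs_natCast_mul_sub hirr halgℤ hδ
  exact ⟨1, min (1 / 2) (2 * c), one_pos, lt_min one_half_pos (by positivity), fun t ht =>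
    Roth.two_mul_rpow_le_L (by linarith) hαδ hc.le hξ ht.le⟩
end

section
/- For every real number θ and every real t ≥ 1, the infimum over integers k ≥ 1 of √(k² + 4 t² sin²(kθ/2)) is at most √(1 + 4π²)·√t. (Equivalently: whatever θ is, the injectivity radius of the corresponding flat plane bundle satisfies inj(t) ≤ (√(1+4π²)/2)·√t for all t ≥ 1.) -/
/-!
By Dirichlet's approximation theorem, for every `Q ≥ 1` some `1 ≤ k ≤ Q` brings `kθ/2` within
`π/Q` of a multiple of `π`, so the `k`-th term of the infimum is at most `√(Q² + (2πt/Q)²)`.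
The two squares balance at `Q = √(2πt)`, which gives `2√(πt)`; the constant `√(1 + 4π²)` is larger
because `4π ≤ 1 + 4π²`.
-/

open Real

theorem exists_pnat_le_abs_mul_sub_round_lt (ξ : ℝ) {Q : ℝ} (hQ : 1 ≤ Q) :
    ∃ k : ℕ+, (k : ℝ) ≤ Q ∧ |k * ξ - round (k * ξ)| < 1 / Q := by
  have Q_pos : 0 < Q := one_pos.trans_le hQ
  obtain ⟨k, k_pos, k_le, hk⟩ := exists_nat_abs_mul_sub_round_le ξ (Nat.floor_pos.mpr hQ)
  exact ⟨⟨k, k_pos⟩, (Nat.le_floor_iff Q_pos.le).mp k_le,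
    hk.trans_lt (one_div_lt_one_div_of_lt Q_pos (Nat.lt_floor_add_one Q))⟩

theorem abs_sin_le_abs_sub_int_mul_pi (x : ℝ) (n : ℤ) : |sin x| ≤ |x - n * π| := by
  simpa only [sin_int_mul_pi, sub_zero] using abs_sin_sub_sin_le x (n * π)

theorem exists_pnat_le_abs_sin_mul_lt (α : ℝ) {Q : ℝ} (hQ : 1 ≤ Q) :
    ∃ k : ℕ+, (k : ℝ) ≤ Q ∧ |sin (k * α)| < π / Q := by
  obtain ⟨k, k_le, hk⟩ := exists_pnat_le_abs_mul_sub_round_lt (α / π) hQ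
  refine ⟨k, k_le, ?_⟩
  set j : ℤ := round (k * (α / π))
  calc |sin (k * α)| ≤ |k * α - j * π| := abs_sin_le_abs_sub_int_mul_pi _ j
    _ = π * |k * (α / π) - j| := by
      rw [← abs_of_pos pi_pos, ← abs_mul, abs_of_pos pi_pos]
      congr 1
      field_simp
    _ < π * (1 / Q) := by gcongr
    _ = π / Q := mul_one_div π Q

theorem L_le_sqrt (θ t : ℝ) (k : ℕ+) :
    L θ t ≤ √((k : ℝ) ^ 2 + 4 * t ^ 2 * sin (k * θ / 2) ^ 2) :=
  ciInf_le ⟨0, Set.forall_mem_range.mpr fun _ ↦ sqrt_nonneg _⟩ k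

theorem L_le_sqrt_sq_add_sq (θ t : ℝ) {Q : ℝ} (hQ : 1 ≤ Q) :
    L θ t ≤ √(Q ^ 2 + (2 * π * t / Q) ^ 2) := by
  obtain ⟨k, k_le, sin_lt⟩ := exists_pnat_le_abs_sin_mul_lt (θ / 2) hQ
  have sin_sq_le : sin (k * θ / 2) ^ 2 ≤ (π / Q) ^ 2 := by
    rw [mul_div_assoc, ← sq_abs]
    gcongr
  calc L θ t ≤ √((k : ℝ) ^ 2 + 4 * t ^ 2 * sin (k * θ / 2) ^ 2) := L_le_sqrt θ t k
    _ ≤ √(Q ^ 2 + 4 * t ^ 2 * (π / Q) ^ 2) := by gcongr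
    _ = √(Q ^ 2 + (2 * π * t / Q) ^ 2) := by ring_nf

theorem stmt_8_general (θ : ℝ) {t : ℝ} (ht : 1 ≤ 2 * π * t) : L θ t ≤ 2 * √(π * t) := by
  calc L θ t ≤ √(√(2 * π * t) ^ 2 + (2 * π * t / √(2 * π * t)) ^ 2) :=
        L_le_sqrt_sq_add_sq θ t (one_le_sqrt.mpr ht)
    _ = √(2 ^ 2 * (π * t)) := by
      rw [div_sqrt, sq_sqrt (zero_le_one.trans ht)]
      ring_nf
    _ = 2 * √(π * t) := by rw [sqrt_mul (sq_nonneg 2), sqrt_sq zero_le_two]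

theorem two_mul_sqrt_mul_le {a : ℝ} (ha : 0 ≤ a) (t : ℝ) :
    2 * √(a * t) ≤ √(1 + 4 * a ^ 2) * √t := by
  have two_mul_sqrt_le : 2 * √a ≤ √(1 + 4 * a ^ 2) := by
    apply le_sqrt_of_sq_le
    rw [mul_pow, sq_sqrt ha]
    linarith [sq_nonneg (2 * a - 1)]
  rw [sqrt_mul ha, ← mul_assoc]
  gcongr

theorem stmt_8 (θ t : ℝ) (ht : 1 ≤ t) :
    L θ t ≤ Real.sqrt (1 + 4 * Real.pi ^ 2) * Real.sqrt t :=
  (stmt_8_general θ (by nlinarith [pi_gt_three])).trans (two_mul_sqrt_mul_le pi_pos.le t)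
end

section
/- Let ξ = Σ_{n=1}^∞ 10^{-n!} (a Liouville number) and θ = 2πξ. Then for every real a > 0, the limit inferior as t → ∞ of t^{-a} · (inf over integers k ≥ 1 of √(k² + 4 t² sin²(kθ/2))) is equal to 0. -/
/-! If `|ξ - j / n| < C / n ^ p`, then after `n` turns of angle `2πξ` the rotation is within
`2πC * n ^ (1 - p)` of the identity. At distance `t = n ^ p` from the soul the rotational
displacement of the `n`-th power of the screw motion is therefore `O(n)`, like its translation, so
`L (2πξ) t = O(t ^ p⁻¹)` at arbitrarily large `t`. A Liouville number has such approximations for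
every `p`. -/

open Filter Real
open scoped Topology

theorem liminf_eq_of_eventually_ge_of_frequently_le {ι α : Type*}
    [ConditionallyCompleteLinearOrder α] [TopologicalSpace α] [OrderTopology α]
    {l : Filter ι} {u v : ι → α} {b : α} (hb : ∀ᶠ i in l, b ≤ u i)
    (huv : ∃ᶠ i in l, u i ≤ v i) (hv : Tendsto v l (𝓝 b)) : liminf u l = b := by
  have : l.NeBot := ⟨by rintro rfl; exact frequently_bot huv⟩
  have hbdd : l.IsBoundedUnder (· ≥ ·) u := isBoundedUnder_of_eventually_ge hb
  obtain ⟨c, hc⟩ := hv.isBoundedUnder_le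
  have hcobdd : l.IsCoboundedUnder (· ≥ ·) u :=
    .of_frequently_le ((huv.and_eventually hc).mono fun _ h ↦ h.1.trans h.2)
  apply le_antisymm _ (le_liminf_of_le hcobdd hb)
  exact (liminf_le_limsup_of_frequently_le huv hbdd hv.isBoundedUnder_le).trans_eq hv.limsup_eq

theorem abs_sin_pi_mul_le (y : ℝ) (j : ℤ) : |sin (π * y)| ≤ π * |y - j| := by
  calc |sin (π * y)| = |sin (π * y - j * π)| := by
        rw [sin_sub_int_mul_pi, abs_mul, abs_neg_one_zpow, one_mul]
    _ ≤ |π * y - j * π| := abs_sin_le_abs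
    _ = π * |y - j| := by rw [mul_comm (j : ℝ), ← mul_sub, abs_mul, abs_of_pos pi_pos]

theorem liouville_remainder {m : ℕ} (hm : 2 ≤ m) (k : ℕ) :
    Liouville (LiouvilleNumber.remainder m k) := by
  have hm₁ : (1 : ℝ) < m := by exact_mod_cast hm
  obtain ⟨j, hj⟩ := LiouvilleNumber.partialSum_eq_rat (by lia : 0 < m) k
  have hsub : LiouvilleNumber.remainder m k =
      liouvilleNumber m - ((j / (m ^ k.factorial : ℕ) : ℚ) : ℝ) := by
    rw [← LiouvilleNumber.partialSum_add_remainder hm₁ k, hj]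
    push_cast
    ring
  rw [hsub, ← forall_liouvilleWith_iff]
  exact fun p ↦ ((liouville_liouvilleNumber hm).liouvilleWith p).sub_rat _

theorem L_nonneg (θ t : ℝ) : 0 ≤ L θ t :=
  iInf_nonneg fun _ ↦ sqrt_nonneg _

theorem L_le_add_abs_sin (θ t : ℝ) (k : ℕ+) :
    L θ t ≤ k + 2 * |t| * |sin (k * θ / 2)| := by
  have hbdd : BddBelow (Set.range fun k : ℕ+ ↦
      √((k : ℝ) ^ 2 + 4 * t ^ 2 * sin ((k : ℝ) * θ / 2) ^ 2)) :=
    ⟨0, Set.forall_mem_range.2 fun _ ↦ sqrt_nonneg _⟩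
  apply (ciInf_le hbdd k).trans
  rw [sqrt_le_left (by positivity), ← sq_abs t, ← sq_abs (sin _)]
  have hcross : 0 ≤ (k : ℝ) * (|t| * |sin (k * θ / 2)|) := by positivity
  linarith

theorem L_two_pi_mul_le (ξ t : ℝ) (k : ℕ+) (j : ℤ) :
    L (2 * π * ξ) t ≤ k * (1 + 2 * π * |t| * |ξ - j / k|) := by
  have hk : (0 : ℝ) < k := by exact_mod_cast k.pos
  have hdist : |k * ξ - j| = k * |ξ - j / k| := by
    rw [← abs_of_pos hk, ← abs_mul, abs_of_pos hk, mul_sub, mul_div_cancel₀ _ hk.ne']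
  calc L (2 * π * ξ) t ≤ k + 2 * |t| * |sin (k * (2 * π * ξ) / 2)| := L_le_add_abs_sin _ _ _
    _ = k + 2 * |t| * |sin (π * (k * ξ))| := by ring_nf
    _ ≤ k + 2 * |t| * (π * |k * ξ - j|) := by gcongr; exact abs_sin_pi_mul_le _ _
    _ = k * (1 + 2 * π * |t| * |ξ - j / k|) := by rw [hdist]; ring

theorem exists_frequently_L_le_rpow {p ξ : ℝ} (hp : 0 < p) (hξ : LiouvilleWith p ξ) :
    ∃ C, ∃ᶠ t in atTop, L (2 * π * ξ) t ≤ C * t ^ p⁻¹ := by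
  obtain ⟨C, -, hC⟩ := hξ.exists_pos
  use 1 + 2 * π * C
  have hpow : Tendsto (fun n : ℕ ↦ (n : ℝ) ^ p) atTop atTop :=
    (tendsto_rpow_atTop hp).comp tendsto_natCast_atTop_atTop
  apply hpow.frequently
  refine hC.mono ?_
  rintro n ⟨hn, j, -, hj⟩
  have hnp : (0 : ℝ) < (n : ℝ) ^ p := by positivity
  calc L (2 * π * ξ) ((n : ℝ) ^ p)
      ≤ n * (1 + 2 * π * |(n : ℝ) ^ p| * |ξ - j / n|) := L_two_pi_mul_le ξ _ ⟨n, hn⟩ j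
    _ = n * (1 + 2 * π * ((n : ℝ) ^ p * |ξ - j / n|)) := by rw [abs_of_pos hnp]; ring
    _ ≤ n * (1 + 2 * π * C) := by gcongr; exact ((lt_div_iff₀' hnp).1 hj).le
    _ = (1 + 2 * π * C) * ((n : ℝ) ^ p) ^ p⁻¹ := by
        rw [rpow_rpow_inv n.cast_nonneg hp.ne', mul_comm]

theorem stmt_9_general {p ξ a : ℝ} (hp : 0 < p) (hξ : LiouvilleWith p ξ) (ha : p⁻¹ < a) :
    liminf (fun t ↦ t ^ (-a) * L (2 * π * ξ) t) atTop = 0 := by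
  obtain ⟨C, hC⟩ := exists_frequently_L_le_rpow hp hξ
  have hdecay : Tendsto (fun t : ℝ ↦ C * t ^ (-(a - p⁻¹))) atTop (𝓝 0) := by
    simpa only [mul_zero] using (tendsto_rpow_neg_atTop (sub_pos.2 ha)).const_mul C
  refine liminf_eq_of_eventually_ge_of_frequently_le ?_ ?_ hdecay
  · filter_upwards [eventually_ge_atTop 0] with t ht
    exact mul_nonneg (rpow_nonneg ht _) (L_nonneg _ _)
  · refine (hC.and_eventually (eventually_gt_atTop 0)).mono ?_
    rintro t ⟨hL, ht⟩
    calc t ^ (-a) * L (2 * π * ξ) t ≤ t ^ (-a) * (C * t ^ p⁻¹) := by gcongr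
      _ = C * t ^ (-(a - p⁻¹)) := by rw [mul_left_comm, ← rpow_add ht]; ring_nf

theorem stmt_9 (a : ℝ) (ha : 0 < a) :
    Filter.liminf
      (fun t : ℝ =>
        t ^ (-a) * L (2 * Real.pi * ∑' n : ℕ, ((10 : ℝ) ^ Nat.factorial (n + 1))⁻¹) t)
      Filter.atTop = 0 := by
  have hξ : Liouville (∑' n : ℕ, ((10 : ℝ) ^ Nat.factorial (n + 1))⁻¹) := by
    simpa [LiouvilleNumber.remainder] using liouville_remainder (m := 10) (by norm_num) 0
  exact stmt_9_general (by positivity) (hξ.liouvilleWith (2 / a)) (by rw [inv_div]; linarith)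
end
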